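/- arXiv:2006.09076 — 6 statements merged into one kernel-verified Lean document; each statement's English description precedes it below -/
import Mathlib

section
/- Shuffle product formula for multiple zeta values: let k=(k_1,…,k_a) and l=(l_1,…,l_b) be nonempty admissible indices. Then ζ(k)·ζ(l) = Σ_h c_h·ζ(h), where h runs over the (finitely many) nonempty admissible indices such that the word w(h) occurs in the shuffle product w(k)⧢w(l), and c_h is its integer coefficient. -/
open scoped Classical

noncomputable section

/-- Multiple zeta value of an index `k = (k₁, …, kₐ)`:
`ζ(k) = Σ_{0 < n₁ < ⋯ < nₐ} ∏ nᵢ^(-kᵢ)`, as a `tsum` of reals. -/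
def mzv (k : List ℕ) : ℝ :=
  ∑' n : Fin k.length → ℕ,
    Set.indicator {n : Fin k.length → ℕ | (∀ i, 0 < n i) ∧ StrictMono n}
      (fun n => ∏ i, ((n i : ℝ) ^ k.get i)⁻¹) n

/-- The word (over the alphabet `{x, y}`, encoded with `y = true`, `x = false`)
attached to an index: `w(k) = y x^(k₁-1) y x^(k₂-1) ⋯ y x^(kₐ-1)`. -/
def word (k : List ℕ) : List Bool :=
  k.flatMap fun ki => true :: List.replicate (ki - 1) false

/-- The index attached to a word (left inverse of `word` on words beginning with `y`). -/
def wordToIndex (w : List Bool) : List ℕ :=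
  w.foldl (fun acc b => if b then acc.concat 1 else acc.dropLast.concat (acc.getLast! + 1)) []

/-- The shuffle product of two words, as a formal `ℤ`-linear combination of words:
`1 ⧢ w = w ⧢ 1 = w` and `(au) ⧢ (bv) = a (u ⧢ bv) + b (au ⧢ v)`. -/
def shuffle : List Bool → List Bool → (List Bool →₀ ℤ)
  | [], w => Finsupp.single w 1
  | a :: u, [] => Finsupp.single (a :: u) 1
  | a :: u, b :: v =>
      (shuffle u (b :: v)).mapDomain (List.cons a) +
        (shuffle (a :: u) v).mapDomain (List.cons b)
  termination_by u v => u.length + v.length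

/-- The power series of the differential form (times `t`) attached to a letter. -/
def omg : Bool → PowerSeries NNReal
  | true => PowerSeries.mk fun n => if n = 0 then 0 else 1
  | false => 1

/-- Multiple polylogarithm of a reversed word. -/
def plR : List Bool → PowerSeries NNReal
  | [] => 1
  | b :: w => PowerSeries.mk fun n => PowerSeries.coeff n (omg b * plR w) / n

/-- Multiple polylogarithm of a word. -/
def pl (w : List Bool) : PowerSeries NNReal := plR w.reverse

/-- Euler operator. -/
def eul (f : PowerSeries NNReal) : PowerSeries NNReal :=
  PowerSeries.mk fun n => (n : NNReal) * PowerSeries.coeff n f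

/-- Linear extension of `F` evaluated at the shuffle product. -/
def shSum {M : Type} [AddCommMonoid M] : (List Bool → M) → List Bool → List Bool → M
  | F, [], w => F w
  | F, a :: u, [] => F (a :: u)
  | F, a :: u, b :: v =>
      shSum (fun w => F (a :: w)) u (b :: v) + shSum (fun w => F (b :: w)) (a :: u) v
  termination_by _ u v => u.length + v.length

theorem shSum_nil_right {M : Type} [AddCommMonoid M] (F : List Bool → M) (u : List Bool) :
    shSum F u [] = F u := by
  cases u <;> simp [shSum]

theorem shSum_congr {M : Type} [AddCommMonoid M] (F G : List Bool → M) (u v : List Bool)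
    (h : ∀ w, w.length = u.length + v.length → F w = G w) : shSum F u v = shSum G u v := by
  induction F, u, v using shSum.induct generalizing G with
  | case1 F w => simpa [shSum] using h w (by simp)
  | case2 F a u => simpa [shSum] using h (a :: u) (by simp)
  | case3 F a u b v ih1 ih2 =>
    rw [shSum, shSum, ih1 (fun w => G (a :: w)), ih2 (fun w => G (b :: w))]
    · intro w hw; apply h; simp at hw ⊢; omega
    · intro w hw; apply h; simp at hw ⊢; omega

theorem shSum_map {M N : Type} [AddCommMonoid M] [AddCommMonoid N] (f : M →+ N)
    (F : List Bool → M) (u v : List Bool) :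
    f (shSum F u v) = shSum (fun w => f (F w)) u v := by
  induction F, u, v using shSum.induct with
  | case1 F w => simp [shSum]
  | case2 F a u => simp [shSum]
  | case3 F a u b v ih1 ih2 => rw [shSum, shSum, map_add, ih1, ih2]

theorem shSum_toReal (F : List Bool → ENNReal) (u v : List Bool) (h : shSum F u v ≠ ⊤) :
    (shSum F u v).toReal = shSum (fun w => (F w).toReal) u v := by
  induction F, u, v using shSum.induct with
  | case1 F w => simp [shSum]
  | case2 F a u => simp [shSum]
  | case3 F a u b v ih1 ih2 =>
    rw [shSum] at h
    have h1 := ENNReal.add_ne_top.1 h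
    rw [shSum, shSum, ENNReal.toReal_add h1.1 h1.2, ih1 h1.1, ih2 h1.2]

theorem shSum_eq (F : List Bool → ℝ) (u v : List Bool) :
    (shuffle u v).sum (fun w c => (c : ℝ) * F w) = shSum F u v := by
  induction F, u, v using shSum.induct with
  | case1 F w => simp [shSum, shuffle]
  | case2 F a u => simp [shSum, shuffle]
  | case3 F a u b v ih1 ih2 =>
    rw [shSum, shuffle, Finsupp.sum_add_index', Finsupp.sum_mapDomain_index,
      Finsupp.sum_mapDomain_index, ih1, ih2]
    all_goals intros; simp [add_mul]

theorem shSum_snoc {M : Type} [AddCommMonoid M] (a b : Bool) (n : ℕ) :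
    ∀ (F : List Bool → M) (u v : List Bool), u.length + v.length = n →
    shSum F (u ++ [a]) (v ++ [b]) =
      shSum (fun w => F (w ++ [a])) u (v ++ [b]) + shSum (fun w => F (w ++ [b])) (u ++ [a]) v := by
  induction n using Nat.strong_induction_on with
  | _ n ih =>
    intro F u v hn
    rcases u with _ | ⟨c, u⟩ <;> rcases v with _ | ⟨d, v⟩
    · simp [shSum, add_comm]
    · simp only [List.nil_append, List.cons_append]
      rw [shSum, shSum, shSum, shSum]
      have := ih v.length (by simp at hn; omega) (fun w => F (d :: w)) [] v (by simp)
      simp only [List.nil_append, List.cons_append] at this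
      rw [this]
      simp only [shSum, List.cons_append]
      abel
    · simp only [List.nil_append, List.cons_append]
      rw [shSum_nil_right, shSum, shSum_nil_right, shSum, shSum_nil_right]
      have := ih u.length (by simp at hn; omega) (fun w => F (c :: w)) u [] (by simp)
      simp only [List.nil_append, shSum_nil_right] at this
      rw [this]
      simp only [shSum_nil_right, List.cons_append]
      abel
    · simp only [List.cons_append]
      rw [shSum, shSum, shSum]
      have h1 := ih (u.length + (d :: v).length) (by simp at hn ⊢; omega)
        (fun w => F (c :: w)) u (d :: v) rfl
      have h2 := ih ((c :: u).length + v.length) (by simp at hn ⊢; omega)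
        (fun w => F (d :: w)) (c :: u) v rfl
      simp only [List.cons_append] at h1 h2
      rw [h1, h2]
      simp only [List.cons_append]
      abel

theorem eul_add (f g : PowerSeries NNReal) : eul (f + g) = eul f + eul g := by
  ext n; simp [eul, mul_add]

theorem eul_mul (f g : PowerSeries NNReal) : eul (f * g) = eul f * g + f * eul g := by
  ext1 n
  simp only [eul, PowerSeries.coeff_mk, PowerSeries.coeff_mul, map_add, Finset.mul_sum,
    ← Finset.sum_add_distrib]
  refine Finset.sum_congr rfl fun p hp => ?_
  rw [← Finset.HasAntidiagonal.mem_antidiagonal.1 hp]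
  push_cast
  ring

/-- `eul` as an additive map. -/
def eulHom : PowerSeries NNReal →+ PowerSeries NNReal where
  toFun := eul
  map_zero' := by ext n; simp [eul]
  map_add' := eul_add

theorem eul_inj (f g : PowerSeries NNReal) (h0 : PowerSeries.coeff 0 f = PowerSeries.coeff 0 g)
    (h : eul f = eul g) : f = g := by
  ext1 n
  rcases Nat.eq_zero_or_pos n with rfl | hn
  · exact h0
  · have := congrArg (PowerSeries.coeff n) h
    simp only [eul, PowerSeries.coeff_mk] at this
    exact mul_left_cancel₀ (by positivity) this

theorem pl_nil : pl [] = 1 := rfl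

theorem pl_snoc_coeff (w : List Bool) (b : Bool) (n : ℕ) :
    PowerSeries.coeff n (pl (w ++ [b])) = PowerSeries.coeff n (omg b * pl w) / n := by
  simp [pl, plR]

theorem pl_coeff_zero (w : List Bool) (h : w ≠ []) : PowerSeries.coeff 0 (pl w) = 0 := by
  obtain ⟨u, b, rfl⟩ := List.eq_nil_or_concat' w |>.resolve_left h
  rw [pl_snoc_coeff]; simp

theorem eul_pl (w : List Bool) (b : Bool) (h : w ≠ [] ∨ b = true) :
    eul (pl (w ++ [b])) = omg b * pl w := by
  ext1 n
  simp only [eul, PowerSeries.coeff_mk, pl_snoc_coeff]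
  rcases Nat.eq_zero_or_pos n with rfl | hn
  · rcases h with h | rfl
    · have := pl_coeff_zero w h
      simp only [PowerSeries.coeff_mul]
      simp [this]
    · simp [PowerSeries.coeff_mul, omg]
  · field_simp

/-- Words that are empty or begin with `y`. -/
def Good (w : List Bool) : Prop := w = [] ∨ w.head? = some true

theorem good_snoc {w : List Bool} {b : Bool} (h : Good (w ++ [b])) :
    Good w ∧ (w ≠ [] ∨ b = true) := by
  cases w <;> simp_all [Good]

theorem shSum_coeff_zero (u v : List Bool) (h : u ≠ [] ∨ v ≠ []) :
    PowerSeries.coeff 0 (shSum pl u v) = 0 := by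
  have h1 := shSum_map (PowerSeries.coeff (R := NNReal) 0).toAddMonoidHom pl u v
  simp only [LinearMap.toAddMonoidHom_coe] at h1
  rw [h1, shSum_congr _ (fun _ => 0)]
  · have := shSum_map (0 : ℕ →+ NNReal) (fun _ => 0) u v
    simpa using this.symm
  · intro w hw
    apply pl_coeff_zero
    rintro rfl
    rcases u <;> rcases v <;> simp_all

theorem pl_mul (n : ℕ) : ∀ u v : List Bool, u.length + v.length = n → Good u → Good v →
    pl u * pl v = shSum pl u v := by
  induction n using Nat.strong_induction_on with
  | _ n ih =>
    intro u v hn hu hv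
    rcases List.eq_nil_or_concat' u with rfl | ⟨u, a, rfl⟩
    · simp [pl_nil, shSum]
    rcases List.eq_nil_or_concat' v with rfl | ⟨v, b, rfl⟩
    · simp [pl_nil, shSum_nil_right]
    have gu := good_snoc hu
    have gv := good_snoc hv
    simp only [List.length_append, List.length_singleton] at hn
    apply eul_inj
    · rw [shSum_coeff_zero _ _ (by simp)]
      have := pl_coeff_zero (u ++ [a]) (by simp)
      simp only [PowerSeries.coeff_mul]
      simp at this
      simp [this]
    · rw [eul_mul, eul_pl _ _ gu.2, eul_pl _ _ gv.2, shSum_snoc a b _ pl u v rfl, eul_add]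
      have e1 := ih (u.length + (v ++ [b]).length) (by simp; omega) u (v ++ [b]) rfl gu.1 hv
      have e2 := ih ((u ++ [a]).length + v.length) (by simp; omega) (u ++ [a]) v rfl hu gv.1
      have f1 := shSum_map eulHom (fun w => pl (w ++ [a])) u (v ++ [b])
      have f2 := shSum_map eulHom (fun w => pl (w ++ [b])) (u ++ [a]) v
      simp only [eulHom, AddMonoidHom.coe_mk, ZeroHom.coe_mk] at f1 f2
      have g1 := shSum_map (AddMonoidHom.mulLeft (omg a)) pl u (v ++ [b])
      have g2 := shSum_map (AddMonoidHom.mulLeft (omg b)) pl (u ++ [a]) v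
      simp only [AddMonoidHom.coe_mulLeft] at g1 g2
      rw [f1, f2, shSum_congr _ (fun w => omg a * pl w) u,
        shSum_congr _ (fun w => omg b * pl w) (u ++ [a]),
        ← g1, ← g2, ← e1, ← e2]
      · ring
      · intro w hw
        apply eul_pl; left; rintro rfl; simp only [List.length_nil, List.length_append, List.length_singleton] at hw; omega
      · intro w hw
        apply eul_pl; left; rintro rfl; simp only [List.length_nil, List.length_append, List.length_singleton] at hw; omega

/-- Value at `1`. -/
def tot (f : PowerSeries NNReal) : ENNReal := ∑' n, ((PowerSeries.coeff n f : NNReal) : ENNReal)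

/-- `tot` as an additive map. -/
def totHom : PowerSeries NNReal →+ ENNReal where
  toFun := tot
  map_zero' := by simp [tot]
  map_add' f g := by simp [tot, ENNReal.tsum_add]

theorem tot_mul (f g : PowerSeries NNReal) : tot (f * g) = tot f * tot g := by
  unfold tot
  rw [← ENNReal.tsum_mul_right]
  simp_rw [← ENNReal.tsum_mul_left]
  rw [← ENNReal.tsum_prod (f := fun i j => ((PowerSeries.coeff i f : NNReal) : ENNReal) *
    ((PowerSeries.coeff j g : NNReal) : ENNReal)),
    ← Finset.HasAntidiagonal.sigmaAntidiagonalEquivProd.tsum_eq, ENNReal.tsum_sigma']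
  refine tsum_congr fun n => ?_
  rw [tsum_fintype, PowerSeries.coeff_mul, ENNReal.ofNNReal_finsetSum, ← Finset.sum_coe_sort]
  simp

/-- Tail multiple zeta values. -/
def tl : List ℕ → ℕ → ENNReal
  | [], _ => 1
  | k :: ks, m => ∑' n : ℕ, if m < n then ((n : ENNReal) ^ k)⁻¹ * tl ks n else 0

theorem coeff_omg_true (f : PowerSeries NNReal) (n : ℕ) :
    PowerSeries.coeff n (omg true * f) = ∑ m ∈ Finset.range n, PowerSeries.coeff m f := by
  rw [mul_comm, PowerSeries.coeff_mul, Finset.Nat.sum_antidiagonal_eq_sum_range_succ_mk,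
    Finset.sum_range_succ]
  simp only [omg, PowerSeries.coeff_mk]
  simp only [Nat.sub_self, if_true, mul_zero, add_zero]
  refine Finset.sum_congr rfl fun m hm => ?_
  have := Finset.mem_range.1 hm
  rw [if_neg (by omega), mul_one]

theorem coeff_block (w : List Bool) (j n : ℕ) :
    PowerSeries.coeff n (pl (w ++ true :: List.replicate j false)) =
      (∑ m ∈ Finset.range n, PowerSeries.coeff m (pl w)) / (n : NNReal) ^ (j + 1) := by
  induction j with
  | zero => simp [pl_snoc_coeff, coeff_omg_true]
  | succ j ih =>
    rw [List.replicate_succ', ← List.cons_append, ← List.append_assoc, pl_snoc_coeff]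
    simp only [omg, one_mul]
    rw [ih, div_div, ← pow_succ]

theorem tot_pl_append (k : List ℕ) (hk : ∀ i ∈ k, 1 ≤ i) : ∀ w : List Bool,
    tot (pl (w ++ word k)) =
      ∑' m, ((PowerSeries.coeff m (pl w) : NNReal) : ENNReal) * tl k m := by
  induction k with
  | nil => intro w; simp [word, tl, tot]
  | cons j ks ih =>
    intro w
    have hj : j - 1 + 1 = j := Nat.sub_add_cancel (hk j (by simp))
    have e : w ++ word (j :: ks) = (w ++ true :: List.replicate (j - 1) false) ++ word ks := by
      simp [word]
    rw [e, ih (fun i hi => hk i (by simp [hi]))]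
    simp_rw [coeff_block, hj, tl, ← ENNReal.tsum_mul_left]
    rw [ENNReal.tsum_comm]
    refine tsum_congr fun n => ?_
    rw [tsum_eq_sum (s := Finset.range n)]
    · rcases Nat.eq_zero_or_pos n with rfl | hn
      · simp
      rw [ENNReal.coe_div (by positivity), ENNReal.ofNNReal_finsetSum, div_eq_mul_inv, Finset.sum_mul,
        Finset.sum_mul]
      refine Finset.sum_congr rfl fun m hm => ?_
      rw [if_pos (Finset.mem_range.1 hm)]
      simp [mul_assoc]
    · intro m hm
      rw [if_neg (by simpa using hm), mul_zero]

theorem tot_pl_word (k : List ℕ) (hk : ∀ i ∈ k, 1 ≤ i) : tot (pl (word k)) = tl k 0 := by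
  have := tot_pl_append k hk []
  rw [List.nil_append] at this
  rw [this, tsum_eq_single 0]
  · simp [pl_nil]
  · intro m hm; simp [pl_nil, PowerSeries.coeff_one, hm]

theorem tl_eq (k : List ℕ) : ∀ m, tl k m = ∑' n : Fin k.length → ℕ,
    if (∀ i, m < n i) ∧ StrictMono n then ∏ i, ((n i : ENNReal) ^ k.get i)⁻¹ else 0 := by
  induction k with
  | nil =>
    intro m
    have : ∀ n : Fin ([] : List ℕ).length → ℕ, StrictMono n := fun n i => i.elim0
    rw [tl, tsum_eq_single (fun i => i.elim0)]
    · rw [if_pos ⟨fun i => i.elim0, this _⟩]; simp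
    · intro b hb; exact absurd (funext fun i => i.elim0) hb
  | cons k ks ih =>
    intro m
    rw [tl]
    refine Eq.trans ?_ ((Fin.consEquiv (fun _ : Fin (ks.length + 1) => ℕ)).tsum_eq _)
    rw [ENNReal.tsum_prod']
    refine tsum_congr fun n => ?_
    rw [ih]
    by_cases h : m < n
    · rw [if_pos h, ← ENNReal.tsum_mul_left]
      refine tsum_congr fun t => ?_
      have : ((∀ i, m < (Fin.consEquiv (fun _ : Fin (ks.length + 1) => ℕ)) (n, t) i) ∧
          StrictMono ((Fin.consEquiv (fun _ : Fin (ks.length + 1) => ℕ)) (n, t))) ↔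
          (∀ i, n < t i) ∧ StrictMono t := by
        simp only [Fin.consEquiv, Equiv.coe_fn_mk]
        constructor
        · rintro ⟨h1, h2⟩
          refine ⟨fun i => ?_, fun i j hij => ?_⟩
          · simpa using h2 (Fin.succ_pos i)
          · simpa using h2 (Fin.succ_lt_succ_iff.2 hij)
        · rintro ⟨h1, h2⟩
          refine ⟨fun i => ?_, fun i j hij => ?_⟩
          · cases i using Fin.cases with
            | zero => simpa using h
            | succ i => simpa using h.trans (h1 i)
          · cases i using Fin.cases with
            | zero =>
              cases j using Fin.cases with
              | zero => simp at hij
              | succ j => simpa using h1 j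
            | succ i =>
              cases j using Fin.cases with
              | zero => simp at hij
              | succ j => simpa using h2 (Fin.succ_lt_succ_iff.1 hij)
      by_cases h2 : (∀ i, n < t i) ∧ StrictMono t
      · rw [if_pos h2]
        refine Eq.trans ?_ (if_pos (this.2 h2)).symm
        refine Eq.trans ?_ (Fin.prod_univ_succ _).symm
        simp [Fin.consEquiv]
      · rw [if_neg h2, mul_zero]
        exact (if_neg fun h3 => h2 (this.1 h3)).symm
    · rw [if_neg h]
      symm
      rw [ENNReal.tsum_eq_zero]
      intro t
      refine if_neg fun h3 => h ?_
      simpa [Fin.consEquiv] using h3.1 (0 : Fin (ks.length + 1))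

theorem mzv_eq (k : List ℕ) : mzv k = (tl k 0).toReal := by
  rw [tl_eq, ENNReal.tsum_toReal_eq, mzv]
  · refine tsum_congr fun n => ?_
    rw [Set.indicator_apply]
    simp only [Set.mem_ofPred_eq]
    split_ifs with h
    · simp [ENNReal.toReal_prod]
    · simp
  · intro n
    split_ifs with h
    · refine ENNReal.prod_ne_top fun i _ => ?_
      have := h.1 i
      simp; omega
    · simp

theorem mzv_word (k : List ℕ) (hk : ∀ i ∈ k, 1 ≤ i) : mzv k = (tot (pl (word k))).toReal := by
  rw [mzv_eq, tot_pl_word k hk]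

theorem word_append (k l : List ℕ) : word (k ++ l) = word k ++ word l := by
  simp [word]

theorem wti (w : List Bool) : word (wordToIndex (true :: w)) = true :: w ∧
    (∀ i ∈ wordToIndex (true :: w), 1 ≤ i) ∧ wordToIndex (true :: w) ≠ [] := by
  induction w using List.reverseRecOn with
  | nil => simp [wordToIndex, word]
  | append_singleton w b ih =>
    have e : wordToIndex (true :: (w ++ [b])) = if b then (wordToIndex (true :: w)).concat 1 else
        (wordToIndex (true :: w)).dropLast.concat ((wordToIndex (true :: w)).getLast! + 1) := by
      rw [← List.cons_append]
      unfold wordToIndex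
      rw [List.foldl_append]
      rfl
    obtain ⟨h1, h2, h3⟩ := ih
    rw [e]
    cases b
    · obtain ⟨ks, j, hj⟩ := List.eq_nil_or_concat' (wordToIndex (true :: w)) |>.resolve_left h3
      rw [hj] at h1 h2 ⊢
      have hj1 : 1 ≤ j := h2 j (by simp)
      obtain ⟨j, rfl⟩ := Nat.exists_eq_add_of_le' hj1
      refine ⟨?_, ?_, by simp⟩
      · rw [← List.cons_append, ← h1]
        simp [word_append, word, List.getLast!_eq_getLast?_getD, List.replicate_succ']
      · intro i hi
        simp [List.getLast!_eq_getLast?_getD] at hi h2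
        rcases hi with hi | hi
        · exact h2 i (Or.inl hi)
        · omega
    · refine ⟨?_, ?_, by simp⟩
      · rw [if_pos rfl, List.concat_eq_append, word_append, h1]
        simp [word]
      · intro i hi
        simp at hi
        rcases hi with hi | hi
        · exact h2 i hi
        · omega

theorem sum_sqrt (n : ℕ) : ∑ m ∈ Finset.range (n + 1), (1 / Real.sqrt m) ≤ 2 * Real.sqrt n := by
  induction n with
  | zero => simp
  | succ n ih =>
    rw [Finset.sum_range_succ]
    have h1 : 0 < Real.sqrt ((n + 1 : ℕ) : ℝ) := Real.sqrt_pos.2 (by positivity)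
    have h2 : Real.sqrt ((n + 1 : ℕ) : ℝ) ^ 2 = n + 1 := by
      rw [Real.sq_sqrt (by positivity)]; push_cast; ring
    have h3 : Real.sqrt (n : ℝ) ^ 2 = n := Real.sq_sqrt (by positivity)
    have h4 : 1 / Real.sqrt ((n + 1 : ℕ) : ℝ) ≤
        2 * (Real.sqrt ((n + 1 : ℕ) : ℝ) - Real.sqrt (n : ℝ)) := by
      rw [div_le_iff₀ h1]
      nlinarith [sq_nonneg (Real.sqrt ((n + 1 : ℕ) : ℝ) - Real.sqrt (n : ℝ))]
    linarith

theorem pl_bound (w : List Bool) (hw : w ≠ []) :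
    ∃ C : ℝ, 0 ≤ C ∧ ∀ n, ((PowerSeries.coeff n (pl w) : NNReal) : ℝ) ≤ C * (1 / Real.sqrt n) := by
  induction w using List.reverseRecOn with
  | nil => exact absurd rfl hw
  | append_singleton w b ih =>
    have hsq : ∀ n : ℕ, 0 < n → 1 ≤ Real.sqrt n ∧ Real.sqrt (n : ℝ) ^ 2 = n := fun n hn =>
      ⟨Real.one_le_sqrt.2 (by exact_mod_cast hn), Real.sq_sqrt (by positivity)⟩
    have h0 : ∀ u : List Bool, ∀ n : ℕ, PowerSeries.coeff n (pl (u ++ [b])) ≤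
        PowerSeries.coeff n (omg b * pl u) / n := fun u n => (pl_snoc_coeff u b n).le
    by_cases h : w = []
    · subst h
      refine ⟨1, zero_le_one, fun n => ?_⟩
      rcases Nat.eq_zero_or_pos n with rfl | hn
      · rw [pl_coeff_zero _ (by simp)]; simp
      obtain ⟨a1, a2⟩ := hsq n hn
      have h1 : PowerSeries.coeff n (omg b * pl []) ≤ 1 := by
        rw [pl_nil, mul_one]
        cases b <;> simp [omg, PowerSeries.coeff_one] <;> split_ifs <;> simp
      have h1' : ((PowerSeries.coeff n (omg b * pl []) : NNReal) : ℝ) ≤ 1 := by exact_mod_cast h1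
      rw [pl_snoc_coeff, one_mul, NNReal.coe_div]
      apply div_le_div₀ zero_le_one h1' (by linarith)
      simp only [NNReal.coe_natCast]
      nlinarith
    · obtain ⟨C, hC, hb⟩ := ih h
      refine ⟨2 * C, by positivity, fun n => ?_⟩
      rcases Nat.eq_zero_or_pos n with rfl | hn
      · rw [pl_coeff_zero _ (by simp)]; simp
      obtain ⟨a1, a2⟩ := hsq n hn
      have hn1 : (1 : ℝ) ≤ n := by exact_mod_cast hn
      rw [pl_snoc_coeff, NNReal.coe_div, NNReal.coe_natCast, div_le_iff₀ (by linarith)]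
      have e : 2 * C * (1 / Real.sqrt n) * n = 2 * C * Real.sqrt n := by
        have : Real.sqrt n ≠ 0 := by linarith
        nth_rewrite 2 [← a2]
        field_simp
      rw [e]
      cases b
      · simp only [omg, one_mul]
        refine (hb n).trans ?_
        have : 1 / Real.sqrt n ≤ 1 := by
          rw [div_le_one (by linarith)]; exact a1
        nlinarith
      · rw [coeff_omg_true, NNReal.coe_sum]
        obtain ⟨n, rfl⟩ := Nat.exists_eq_add_of_le' hn
        refine (Finset.sum_le_sum fun m _ => hb m).trans ?_
        rw [← Finset.mul_sum]
        have h2 := sum_sqrt n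
        have h3 : Real.sqrt n ≤ Real.sqrt ((n + 1 : ℕ) : ℝ) :=
          Real.sqrt_le_sqrt (by push_cast; linarith)
        nlinarith

theorem tot_ne_top (w : List Bool) (hw : w ≠ []) : tot (pl (w ++ [false])) ≠ ⊤ := by
  obtain ⟨C, hC, h⟩ := pl_bound w hw
  unfold tot
  rw [ENNReal.tsum_coe_ne_top_iff_summable, ← NNReal.summable_coe]
  have hs : Summable fun n : ℕ => C * (1 / (n : ℝ) ^ (3 / 2 : ℝ)) :=
    (Real.summable_one_div_nat_rpow.2 (by norm_num)).mul_left C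
  refine Summable.of_nonneg_of_le (fun n => NNReal.coe_nonneg _) (fun n => ?_) hs
  rcases Nat.eq_zero_or_pos n with rfl | hn
  · rw [pl_coeff_zero _ (by simp)]; simp
  have hn1 : (0 : ℝ) < n := by exact_mod_cast hn
  have e : (n : ℝ) ^ (3 / 2 : ℝ) = Real.sqrt n * n := by
    rw [Real.sqrt_eq_rpow, ← Real.rpow_add_one hn1.ne']; norm_num
  rw [pl_snoc_coeff, NNReal.coe_div, NNReal.coe_natCast, e, div_le_iff₀ hn1]
  simp only [omg, one_mul]
  refine (h n).trans (le_of_eq ?_)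
  field_simp

/-- **Shuffle product formula for multiple zeta values.**
For nonempty admissible indices `k`, `l`,
`ζ(k)·ζ(l) = Σ_h c_h ζ(h)`, where `h` runs over the (admissible) indices whose word
occurs in `w(k) ⧢ w(l)` and `c_h` is its integer coefficient. -/
theorem shuffle_product_formula (k l : List ℕ)
    (hk : k ≠ []) (hk1 : ∀ i ∈ k, 1 ≤ i) (hka : 2 ≤ k.getLast hk)
    (hl : l ≠ []) (hl1 : ∀ i ∈ l, 1 ≤ i) (hla : 2 ≤ l.getLast hl) :
    mzv k * mzv l =
      ∑ w ∈ (shuffle (word k) (word l)).support,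
        ((shuffle (word k) (word l) w : ℤ) : ℝ) * mzv (wordToIndex w) := by
  have key : ∀ (k : List ℕ) (hk : k ≠ []) (hk1 : ∀ i ∈ k, 1 ≤ i) (hka : 2 ≤ k.getLast hk),
      (∃ u, word k = true :: u) ∧ tot (pl (word k)) ≠ ⊤ := by
    intro k hk hk1 hka
    constructor
    · cases k with
      | nil => exact absurd rfl hk
      | cons j ks => exact ⟨_, by simp [word]; rfl⟩
    · obtain ⟨ks, j, rfl⟩ := List.eq_nil_or_concat' k |>.resolve_left hk
      simp at hka
      obtain ⟨j, rfl⟩ := Nat.exists_eq_add_of_le' hka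
      have : word (ks ++ [j + 2]) = (word ks ++ true :: List.replicate j false) ++ [false] := by
        simp [word_append, word, List.replicate_succ']
      rw [this]
      exact tot_ne_top _ (by simp)
  obtain ⟨⟨u, hu⟩, fk⟩ := key k hk hk1 hka
  obtain ⟨⟨v, hv⟩, fl⟩ := key l hl hl1 hla
  have h1 := shSum_eq (fun w => mzv (wordToIndex w)) (word k) (word l)
  rw [Finsupp.sum] at h1
  rw [h1, mzv_word k hk1, mzv_word l hl1, ← ENNReal.toReal_mul, ← tot_mul]
  have h2 : tot (pl (word k) * pl (word l)) = shSum (fun w => tot (pl w)) (word k) (word l) := by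
    rw [pl_mul _ _ _ rfl (by simp [Good, hu]) (by simp [Good, hv])]
    exact shSum_map totHom pl _ _
  have h3 : tot (pl (word k) * pl (word l)) ≠ ⊤ := by
    rw [tot_mul]; exact ENNReal.mul_ne_top fk fl
  rw [h2] at h3 ⊢
  rw [shSum_toReal _ _ _ h3, hu, hv, shSum, shSum]
  have h4 : ∀ w, mzv (wordToIndex (true :: w)) = (tot (pl (true :: w))).toReal := by
    intro w
    obtain ⟨e1, e2, _⟩ := wti w
    rw [mzv_word _ e2, e1]
  simp only [h4]
end
end

section
/- Shuffle relation for finite multiple zeta values: let p be a prime and let k=(k_1,…,k_a), l=(l_1,…,l_b) be nonempty indices. Then (−1)^{wt(l)}·ζ^{(p)}(k_1,…,k_a, l_b, l_{b−1},…,l_1) = Σ_h c_h·ζ^{(p)}(h) in ℤ/pℤ, where h runs over the nonempty indices with w(h) occurring in the shuffle product w(k)⧢w(l) and c_h is its integer coefficient. -/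
open scoped Classical

noncomputable section

/-- The finite multiple harmonic sum `ζ^{(p)}(k) = Σ_{0 < n₁ < ⋯ < n_d ≤ p-1} ∏ nᵢ^(-kᵢ)`
computed in `ZMod p` (the `nᵢ` range over nonzero residues). -/
def zetaP (p : ℕ) (k : List ℕ) : ZMod p :=
  ∑ n ∈ Finset.univ.filter
      (fun n : Fin k.length → Fin p => (∀ i, 0 < (n i : ℕ)) ∧ StrictMono n),
    ∏ i, (((n i : ℕ) : ZMod p)⁻¹) ^ k.get i

/-- Linear extension of `φ` evaluated at the shuffle product. -/
def shT {R : Type} [CommRing R] (φ : List Bool → R) (u v : List Bool) : R :=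
  (shuffle u v).sum fun w c => (c : R) * φ w

theorem shT_nil_left {R : Type} [CommRing R] (φ : List Bool → R) (v : List Bool) :
    shT φ [] v = φ v := by
  unfold shT
  rw [shuffle, Finsupp.sum_single_index] <;> simp

theorem shT_nil_right {R : Type} [CommRing R] (φ : List Bool → R) (v : List Bool) :
    shT φ v [] = φ v := by
  cases v with
  | nil => exact shT_nil_left φ []
  | cons a u =>
    unfold shT
    rw [shuffle, Finsupp.sum_single_index] <;> simp

theorem shT_cons {R : Type} [CommRing R] (φ : List Bool → R) (a b : Bool) (u v : List Bool) :
    shT φ (a :: u) (b :: v) =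
      shT (fun w => φ (a :: w)) u (b :: v) + shT (fun w => φ (b :: w)) (a :: u) v := by
  unfold shT
  rw [shuffle, Finsupp.sum_add_index', Finsupp.sum_mapDomain_index, Finsupp.sum_mapDomain_index]
  all_goals intros
  all_goals simp [add_mul]

theorem shT_snoc {R : Type} [CommRing R] (a b : Bool) (N : ℕ) :
    ∀ (u v : List Bool) (φ : List Bool → R), u.length + v.length = N →
    shT φ (u ++ [a]) (v ++ [b]) =
      shT (fun w => φ (w ++ [a])) u (v ++ [b]) + shT (fun w => φ (w ++ [b])) (u ++ [a]) v := by
  induction N with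
  | zero =>
    intro u v φ h
    have hu : u = [] := List.length_eq_zero_iff.1 (by omega)
    have hv : v = [] := List.length_eq_zero_iff.1 (by omega)
    subst hu hv
    simp only [List.nil_append, shT_cons, shT_nil_left, shT_nil_right, List.cons_append]
    ring
  | succ N ih =>
    intro u v φ h
    cases u with
    | nil =>
      cases v with
      | nil => simp at h
      | cons d v =>
        have h2 := ih [] v (fun w => φ (d :: w)) (by simpa using h)
        simp only [List.nil_append, List.cons_append, shT_cons, shT_nil_left, shT_nil_right] at h2 ⊢
        rw [h2]; ring
    | cons c u =>
      cases v with
      | nil =>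
        have h2 := ih u [] (fun w => φ (c :: w)) (by simpa using h)
        simp only [List.nil_append, List.cons_append, shT_cons, shT_nil_left, shT_nil_right] at h2 ⊢
        rw [h2]; ring
      | cons d v =>
        have h1 := ih u (d :: v) (fun w => φ (c :: w)) (by simp at h ⊢; omega)
        have h2 := ih (c :: u) v (fun w => φ (d :: w)) (by simp at h ⊢; omega)
        simp only [List.cons_append, shT_cons] at h1 h2 ⊢
        rw [h1, h2]; ring

/-- The series of the differential form: `x ↦ 1`, `y ↦ t/(1-t)`. -/
def formE (p : ℕ) (a : Bool) : PowerSeries (ZMod p) :=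
  PowerSeries.mk fun n => if a then (if n = 0 then 0 else 1) else (if n = 0 then 1 else 0)

theorem formE_false (p : ℕ) : formE p false = 1 := by
  ext n; simp [formE, PowerSeries.coeff_one]

/-- One (formal) integration step. -/
def stepW (p : ℕ) (f : PowerSeries (ZMod p)) (a : Bool) : PowerSeries (ZMod p) :=
  PowerSeries.mk fun n => ((n : ZMod p))⁻¹ * PowerSeries.coeff n (f * formE p a)

/-- Polylogarithm of a word. -/
def polyW (p : ℕ) (w : List Bool) : PowerSeries (ZMod p) := w.foldl (stepW p) 1

theorem polyW_snoc (p : ℕ) (w : List Bool) (a : Bool) :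
    polyW p (w ++ [a]) = stepW p (polyW p w) a := by
  simp [polyW]

theorem stepW_coeff_zero (p : ℕ) (f : PowerSeries (ZMod p)) (a : Bool) :
    PowerSeries.coeff 0 (stepW p f a) = 0 := by
  rw [stepW, PowerSeries.coeff_mk, Nat.cast_zero, ZMod.inv_zero, zero_mul]

theorem coeff_mul_formE_true (p : ℕ) (f : PowerSeries (ZMod p)) (n : ℕ) :
    PowerSeries.coeff n (f * formE p true) = ∑ m ∈ Finset.range n, PowerSeries.coeff m f := by
  rw [PowerSeries.coeff_mul, Finset.Nat.sum_antidiagonal_eq_sum_range_succ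
    (fun i j => PowerSeries.coeff i f * PowerSeries.coeff j (formE p true)),
    Finset.sum_range_succ]
  simp only [formE, PowerSeries.coeff_mk, Nat.sub_self, if_true, mul_zero, add_zero]
  refine Finset.sum_congr rfl fun i hi => ?_
  have : n - i ≠ 0 := by have := Finset.mem_range.1 hi; omega
  simp [this]

theorem cast_ne (p : ℕ) (n : ℕ) (h0 : n ≠ 0) (hn : n < p) : (n : ZMod p) ≠ 0 := by
  rw [Ne, ZMod.natCast_eq_zero_iff]
  exact fun h => absurd (Nat.le_of_dvd (Nat.pos_of_ne_zero h0) h) (by omega)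

theorem theta_stepW (p : ℕ) [Fact p.Prime] (f : PowerSeries (ZMod p)) (a : Bool)
    (h : PowerSeries.coeff 0 (f * formE p a) = 0) (n : ℕ) (hn : n < p) :
    (n : ZMod p) * PowerSeries.coeff n (stepW p f a) = PowerSeries.coeff n (f * formE p a) := by
  by_cases h0 : n = 0
  · subst h0
    rw [h]; simp
  · rw [stepW, PowerSeries.coeff_mk, mul_inv_cancel_left₀ (cast_ne p n h0 hn)]

theorem conv_step (p : ℕ) [Fact p.Prime] (f g : PowerSeries (ZMod p)) (a b : Bool)
    (hf : PowerSeries.coeff 0 (f * formE p a) = 0)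
    (hg : PowerSeries.coeff 0 (g * formE p b) = 0) (n : ℕ) (hn : n < p) :
    PowerSeries.coeff n (stepW p f a * stepW p g b) =
      PowerSeries.coeff n (stepW p (f * stepW p g b) a) +
      PowerSeries.coeff n (stepW p (stepW p f a * g) b) := by
  by_cases h0 : n = 0
  · subst h0
    rw [stepW_coeff_zero, stepW_coeff_zero, PowerSeries.coeff_mul]
    simp [stepW_coeff_zero]
  · apply mul_left_cancel₀ (cast_ne p n h0 hn)
    have key : (n : ZMod p) * PowerSeries.coeff n (stepW p f a * stepW p g b) =
        PowerSeries.coeff n ((f * formE p a) * stepW p g b) +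
        PowerSeries.coeff n (stepW p f a * (g * formE p b)) := by
      rw [PowerSeries.coeff_mul, PowerSeries.coeff_mul, PowerSeries.coeff_mul, Finset.mul_sum,
        ← Finset.sum_add_distrib]
      refine Finset.sum_congr rfl fun ij hij => ?_
      have hs := Finset.HasAntidiagonal.mem_antidiagonal.1 hij
      rw [← theta_stepW p f a hf _ (by omega), ← theta_stepW p g b hg _ (by omega), ← hs]
      push_cast
      ring
    rw [key, mul_add]
    simp only [stepW, PowerSeries.coeff_mk]
    rw [mul_inv_cancel_left₀ (cast_ne p n h0 hn), mul_inv_cancel_left₀ (cast_ne p n h0 hn)]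
    congr 2 <;> ring

/-- Words that are empty or begin with `y`. -/
def okW (w : List Bool) : Prop := w = [] ∨ ∃ u, w = true :: u

theorem okW_snoc {u : List Bool} {a : Bool} (h : okW (u ++ [a])) :
    okW u ∧ ∀ p : ℕ, PowerSeries.coeff 0 (polyW p u * formE p a) = 0 := by
  rcases h with h | ⟨w, h⟩
  · simp at h
  · rcases List.eq_nil_or_concat u with rfl | ⟨u', c, rfl⟩
    · refine ⟨Or.inl rfl, fun p => ?_⟩
      simp at h
      rw [h.1, coeff_mul_formE_true]; simp
    · constructor
      · right
        cases u' <;> simp_all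
      · intro p
        rw [List.concat_eq_append, polyW_snoc, PowerSeries.coeff_mul]
        simp [stepW_coeff_zero]

theorem shT_stepW (p : ℕ) (u v : List Bool) (a : Bool) (n : ℕ) (f : PowerSeries (ZMod p))
    (h : ∀ m ≤ n, PowerSeries.coeff m f = shT (fun w => PowerSeries.coeff m (polyW p w)) u v) :
    shT (fun w => PowerSeries.coeff n (polyW p (w ++ [a]))) u v =
      PowerSeries.coeff n (stepW p f a) := by
  simp only [polyW_snoc, stepW, PowerSeries.coeff_mk, PowerSeries.coeff_mul]
  have : ∀ ij ∈ Finset.HasAntidiagonal.antidiagonal n, PowerSeries.coeff ij.1 f *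
      PowerSeries.coeff ij.2 (formE p a) =
      shT (fun w => PowerSeries.coeff ij.1 (polyW p w)) u v *
        PowerSeries.coeff ij.2 (formE p a) := by
    intro ij hij
    have := Finset.HasAntidiagonal.mem_antidiagonal.1 hij
    rw [h _ (by omega)]
  rw [Finset.sum_congr rfl this]
  simp only [shT, Finsupp.sum, Finset.mul_sum, Finset.sum_mul]
  rw [Finset.sum_comm]
  refine Finset.sum_congr rfl fun _ _ => Finset.sum_congr rfl fun _ _ => ?_
  ring

theorem shT_polyW (p : ℕ) [Fact p.Prime] (N : ℕ) :
    ∀ u v : List Bool, u.length + v.length = N → okW u → okW v → ∀ n < p,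
    PowerSeries.coeff n (polyW p u * polyW p v) =
      shT (fun w => PowerSeries.coeff n (polyW p w)) u v := by
  induction N using Nat.strong_induction_on with
  | _ N ih =>
    intro u v hN hu hv n hn
    rcases List.eq_nil_or_concat u with rfl | ⟨u', a, rfl⟩
    · rw [shT_nil_left]; simp [polyW]
    rcases List.eq_nil_or_concat v with rfl | ⟨v', b, rfl⟩
    · rw [shT_nil_right]; simp [polyW]
    rw [List.concat_eq_append] at *
    rw [List.concat_eq_append] at *
    have hu' := okW_snoc hu
    have hv' := okW_snoc hv
    simp only [List.length_append, List.length_singleton] at hN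
    rw [shT_snoc a b _ u' v' _ rfl,
      shT_stepW p u' (v' ++ [b]) a n (polyW p u' * polyW p (v' ++ [b]))
        (fun m hm => ih _ (by simp; omega) u' (v' ++ [b]) rfl hu'.1 hv m (by omega)),
      shT_stepW p (u' ++ [a]) v' b n (polyW p (u' ++ [a]) * polyW p v')
        (fun m hm => ih _ (by simp; omega) (u' ++ [a]) v' rfl hu hv'.1 m (by omega)),
      polyW_snoc, polyW_snoc]
    exact conv_step p _ _ a b (hu'.2 p) (hv'.2 p) n hn

/-- Step for an index entry. -/
def stepI (p : ℕ) (f : ℕ → ZMod p) (s : ℕ) : ℕ → ZMod p :=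
  fun n => ((n : ZMod p))⁻¹ ^ s * ∑ m ∈ Finset.range n, f m

/-- Coefficients of the polylogarithm of an index. -/
def polyI (p : ℕ) (k : List ℕ) : ℕ → ZMod p :=
  k.foldl (stepI p) (fun n => if n = 0 then 1 else 0)

theorem polyI_snoc (p : ℕ) (k : List ℕ) (s : ℕ) :
    polyI p (k ++ [s]) = stepI p (polyI p k) s := by simp [polyI]

theorem stepI_succ (p : ℕ) (f : ℕ → ZMod p) (s n : ℕ) :
    stepI p f (s + 1) n = (n : ZMod p)⁻¹ * stepI p f s n := by
  simp only [stepI]; ring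

theorem polyW_true (p : ℕ) (w : List Bool) (n : ℕ) : PowerSeries.coeff n (polyW p (w ++ [true])) =
    (n : ZMod p)⁻¹ * ∑ m ∈ Finset.range n, PowerSeries.coeff m (polyW p w) := by
  rw [polyW_snoc, stepW, PowerSeries.coeff_mk, coeff_mul_formE_true]

theorem polyW_false (p : ℕ) (w : List Bool) (n : ℕ) :
    PowerSeries.coeff n (polyW p (w ++ [false])) =
    (n : ZMod p)⁻¹ * PowerSeries.coeff n (polyW p w) := by
  rw [polyW_snoc, stepW, PowerSeries.coeff_mk, formE_false, mul_one]

theorem polyW_word (p : ℕ) (k : List ℕ) (hk : ∀ i ∈ k, 1 ≤ i) :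
    ∀ n, PowerSeries.coeff n (polyW p (word k)) = polyI p k n := by
  induction k using List.reverseRecOn with
  | nil => intro n; simp [word, polyW, polyI, PowerSeries.coeff_one]
  | append_singleton k s ih =>
    have ih' := ih (fun i hi => hk i (by simp [hi]))
    obtain ⟨t, rfl⟩ : ∃ t, s = t + 1 := ⟨s - 1, by have := hk s (by simp); omega⟩
    have hw : word (k ++ [t + 1]) = word k ++ (true :: List.replicate t false) := by simp [word]
    rw [hw, polyI_snoc]
    clear hk hw
    induction t with
    | zero => intro n; rw [List.replicate_zero, polyW_true]; simp [stepI, ih']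
    | succ t iht =>
      intro n
      rw [List.replicate_succ', ← List.cons_append, ← List.append_assoc, polyW_false, iht,
        stepI_succ p _ (t + 1)]

theorem polyI_wordToIndex (p : ℕ) (w : List Bool) :
    wordToIndex (true :: w) ≠ [] ∧
    ∀ n, polyI p (wordToIndex (true :: w)) n = PowerSeries.coeff n (polyW p (true :: w)) := by
  induction w using List.reverseRecOn with
  | nil =>
    constructor
    · simp [wordToIndex]
    · intro n
      have h := polyW_true p [] n
      rw [List.nil_append] at h
      rw [h]
      simp [wordToIndex, polyI, stepI, polyW, PowerSeries.coeff_one]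
  | append_singleton w b ih =>
    obtain ⟨h1, h2⟩ := ih
    cases b with
    | true =>
      have hw : wordToIndex (true :: (w ++ [true])) = wordToIndex (true :: w) ++ [1] := by
        simp [wordToIndex]
      rw [hw]
      refine ⟨by simp, fun n => ?_⟩
      rw [polyI_snoc, ← List.cons_append, polyW_true]
      simp [stepI, h2]
    | false =>
      have hw : wordToIndex (true :: (w ++ [false])) = (wordToIndex (true :: w)).dropLast ++
          [(wordToIndex (true :: w)).getLast! + 1] := by
        simp [wordToIndex]
      rw [hw]
      refine ⟨by simp, fun n => ?_⟩
      rw [← List.cons_append, polyW_false, ← h2]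
      rcases List.eq_nil_or_concat (wordToIndex (true :: w)) with h | ⟨u, s, h⟩
      · exact absurd h h1
      · rw [h, List.concat_eq_append, List.dropLast_concat, polyI_snoc, polyI_snoc]
        have : (u ++ [s]).getLast! = s := by simp [List.getLast!_eq_getLast?_getD]
        rw [this, stepI_succ]

/-- Multiple harmonic sums with a lower bound. -/
def zetaG (p m : ℕ) (k : List ℕ) : ZMod p :=
  ∑ n ∈ Finset.univ.filter
      (fun n : Fin k.length → Fin p => (∀ i, m < (n i : ℕ)) ∧ StrictMono n),
    ∏ i, (((n i : ℕ) : ZMod p)⁻¹) ^ k.get i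

theorem zetaG_nil (p m : ℕ) : zetaG p m [] = 1 := by
  unfold zetaG
  have : (Finset.univ.filter (fun n : Fin ([] : List ℕ).length → Fin p =>
      (∀ i, m < (n i : ℕ)) ∧ StrictMono n)) = Finset.univ := by
    apply Finset.filter_true_of_mem
    intro n _
    exact ⟨fun i => i.elim0, fun i => i.elim0⟩
  rw [this]
  simp

theorem zetaG_cons (p m s : ℕ) (k : List ℕ) : zetaG p m (s :: k) =
    ∑ n ∈ Finset.range p, if m < n then (n : ZMod p)⁻¹ ^ s * zetaG p n k else 0 := by
  rw [← Fin.sum_univ_eq_sum_range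
    (fun n => if m < n then (n : ZMod p)⁻¹ ^ s * zetaG p n k else 0)]
  unfold zetaG
  rw [Finset.sum_filter]
  have h := (Fin.consEquiv (fun _ : Fin (k.length + 1) => Fin p)).sum_comp
    (fun n : Fin (s :: k).length → Fin p =>
      if (∀ i, m < (n i : ℕ)) ∧ StrictMono n then
        ∏ i, (((n i : ℕ) : ZMod p)⁻¹) ^ (s :: k).get i else 0)
  refine h.symm.trans ?_
  rw [Fintype.sum_prod_type]
  refine Finset.sum_congr rfl fun a _ => ?_
  by_cases hm : m < (a : ℕ)
  · rw [if_pos hm, Finset.mul_sum, Finset.sum_filter]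
    refine Finset.sum_congr rfl fun n _ => ?_
    have e : ((∀ i : Fin (k.length + 1), m < ((Fin.cons a n : Fin (k.length + 1) → Fin p) i : ℕ)) ∧
        StrictMono (Fin.cons a n : Fin (k.length + 1) → Fin p)) ↔
        ((∀ i, (a : ℕ) < (n i : ℕ)) ∧ StrictMono n) := by
      constructor
      · rintro ⟨_, h2⟩
        refine ⟨fun i => ?_, fun i j hij => ?_⟩
        · have := h2 (Fin.succ_pos i)
          simpa using this
        · have := h2 (Fin.succ_lt_succ_iff.2 hij)
          simpa using this
      · rintro ⟨h1, h2⟩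
        refine ⟨fun i => ?_, fun i j => ?_⟩
        · refine Fin.cases ?_ (fun i => ?_) i
          · simpa using hm
          · simpa using hm.trans (h1 i)
        · refine Fin.cases ?_ (fun i => ?_) i <;> refine Fin.cases ?_ (fun j => ?_) j
          · simp
          · intro _; simpa using h1 j
          · intro h; exact absurd h (by simp)
          · intro h; simpa using h2 (Fin.succ_lt_succ_iff.1 h)
    refine (if_congr e ?_ rfl)
    exact Fin.prod_univ_succ (n := k.length) _
  · rw [if_neg hm]
    refine Finset.sum_eq_zero fun n _ => if_neg ?_
    rintro ⟨h1, _⟩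
    exact hm (h1 (0 : Fin (k.length + 1)))

theorem sum_zetaG (p : ℕ) (l : List ℕ) (s : ℕ) (f : ℕ → ZMod p) :
    ∑ m ∈ Finset.range p, f m * zetaG p m (s :: l) =
      ∑ n ∈ Finset.range p, stepI p f s n * zetaG p n l := by
  simp only [zetaG_cons, Finset.mul_sum, stepI, Finset.sum_mul]
  rw [Finset.sum_comm]
  refine Finset.sum_congr rfl fun n hn => ?_
  have hn := Finset.mem_range.1 hn
  simp only [mul_ite, mul_zero]
  rw [← Finset.sum_filter]
  have : (Finset.range p).filter (fun m => m < n) = Finset.range n := by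
    ext i; simp; omega
  rw [this]
  refine Finset.sum_congr rfl fun m _ => ?_
  ring

theorem sum_zetaG_append (p : ℕ) (k l : List ℕ) : ∀ f : ℕ → ZMod p,
    ∑ m ∈ Finset.range p, f m * zetaG p m (k ++ l) =
      ∑ n ∈ Finset.range p, (k.foldl (stepI p) f) n * zetaG p n l := by
  induction k with
  | nil => intro f; rfl
  | cons s k ih =>
    intro f
    rw [List.cons_append, sum_zetaG, ih, List.foldl_cons]

theorem zetaP_append (p : ℕ) (hp : 0 < p) (k l : List ℕ) :
    zetaP p (k ++ l) = ∑ n ∈ Finset.range p, polyI p k n * zetaG p n l := by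
  rw [polyI, ← sum_zetaG_append, Finset.sum_eq_single 0]
  · simp [zetaP, zetaG]
  · intro b _ hb; simp [hb]
  · intro h; simp at h; omega

theorem zetaP_eq (p : ℕ) (hp : 0 < p) (k : List ℕ) :
    zetaP p k = ∑ n ∈ Finset.range p, polyI p k n := by
  have := zetaP_append p hp k []
  simpa [zetaG_nil] using this

theorem zetaG_reverse (p : ℕ) [Fact p.Prime] (l : List ℕ) : ∀ m < p,
    zetaG p m l.reverse = (-1) ^ l.sum * ∑ n ∈ Finset.range (p - m), polyI p l n := by
  induction l using List.reverseRecOn with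
  | nil =>
    intro m hm
    have : p - m ≠ 0 := by omega
    rw [List.reverse_nil, zetaG_nil]
    simp [polyI]
    omega
  | append_singleton l s ih =>
    intro m hm
    rw [List.reverse_append, List.reverse_singleton, List.singleton_append, zetaG_cons, polyI_snoc]
    obtain ⟨q, hq⟩ : ∃ q, p - m = q + 1 := ⟨p - m - 1, by omega⟩
    rw [hq, Finset.sum_range_succ']
    have h0 : stepI p (polyI p l) s 0 = 0 := by simp [stepI]
    rw [h0, add_zero, ← Finset.sum_filter, Finset.mul_sum]
    refine Finset.sum_bij' (fun n _ => p - n - 1) (fun i _ => p - (i + 1)) ?_ ?_ ?_ ?_ ?_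
    · intro n hn; simp at hn ⊢; omega
    · intro n hn; simp at hn ⊢; omega
    · intro n hn; simp at hn ⊢; omega
    · intro n hn; simp at hn ⊢; omega
    · intro n hn
      simp at hn
      have e : p - n - 1 + 1 = p - n := by omega
      rw [e, ih n hn.1, stepI]
      have : ((p - n : ℕ) : ZMod p) = - (n : ZMod p) := by
        rw [Nat.cast_sub hn.1.le]; simp
      rw [this, List.sum_append, List.sum_singleton, pow_add]
      have h2 : (-(n : ZMod p))⁻¹ ^ s = (-1) ^ s * (n : ZMod p)⁻¹ ^ s := by
        rw [← mul_pow, inv_neg, neg_one_mul]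
      have h3 : ((-1 : ZMod p) ^ s) * (-1) ^ s = 1 := by rw [← mul_pow]; simp
      rw [h2]
      linear_combination (-((n : ZMod p)⁻¹ ^ s * (-1) ^ l.sum *
        ∑ n ∈ Finset.range (p - n), polyI p l n)) * h3

theorem word_ne (k : List ℕ) (hk : k ≠ []) : ∃ u, word k = true :: u := by
  cases k with
  | nil => exact absurd rfl hk
  | cons s k => exact ⟨_, by simp [word]; rfl⟩

/-- **Shuffle relation for finite multiple zeta values.**
For a prime `p` and nonempty indices `k = (k₁,…,kₐ)`, `l = (l₁,…,l_b)`,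
`(-1)^{wt(l)} ζ^{(p)}(k₁,…,kₐ,l_b,…,l₁) = Σ_h c_h ζ^{(p)}(h)` in `ℤ/pℤ`,
where `h` runs over the indices whose word occurs in `w(k) ⧢ w(l)` with
integer coefficient `c_h`. -/
theorem shuffle_relation_fmzv (p : ℕ) (hp : p.Prime) (k l : List ℕ)
    (hk : k ≠ []) (hk1 : ∀ i ∈ k, 1 ≤ i)
    (hl : l ≠ []) (hl1 : ∀ i ∈ l, 1 ≤ i) :
    (-1 : ZMod p) ^ l.sum * zetaP p (k ++ l.reverse) =
      ∑ w ∈ (shuffle (word k) (word l)).support,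
        ((shuffle (word k) (word l) w : ℤ) : ZMod p) * zetaP p (wordToIndex w) := by
  have : Fact p.Prime := ⟨hp⟩
  have hp0 := hp.pos
  change _ = shT (fun w => zetaP p (wordToIndex w)) (word k) (word l)
  have h1 : shT (fun w => zetaP p (wordToIndex w)) (word k) (word l) =
      shT (fun w => ∑ n ∈ Finset.range p, PowerSeries.coeff n (polyW p w)) (word k) (word l) := by
    obtain ⟨u, hu⟩ := word_ne k hk
    obtain ⟨v, hv⟩ := word_ne l hl
    rw [hu, hv, shT_cons, shT_cons]
    simp only [zetaP_eq p hp0, (polyI_wordToIndex p _).2]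
  have h2 : shT (fun w => ∑ n ∈ Finset.range p, PowerSeries.coeff n (polyW p w))
      (word k) (word l) = ∑ n ∈ Finset.range p,
        shT (fun w => PowerSeries.coeff n (polyW p w)) (word k) (word l) := by
    simp only [shT, Finsupp.sum, Finset.mul_sum]
    rw [Finset.sum_comm]
  rw [h1, h2]
  have h3 : ∀ n ∈ Finset.range p,
      shT (fun w => PowerSeries.coeff n (polyW p w)) (word k) (word l) =
      ∑ i ∈ Finset.range (n + 1), polyI p k i * polyI p l (n - i) := by
    intro n hn
    rw [← shT_polyW p _ (word k) (word l) rfl (Or.inr (word_ne k hk)) (Or.inr (word_ne l hl)) n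
      (Finset.mem_range.1 hn), PowerSeries.coeff_mul,
      Finset.Nat.sum_antidiagonal_eq_sum_range_succ
        (fun i j => PowerSeries.coeff i (polyW p (word k)) *
          PowerSeries.coeff j (polyW p (word l)))]
    simp only [polyW_word p k hk1, polyW_word p l hl1]
  rw [Finset.sum_congr rfl h3,
    Finset.sum_range_diag_flip p (fun i j => polyI p k i * polyI p l j),
    zetaP_append p hp0, Finset.mul_sum]
  refine Finset.sum_congr rfl fun m hm => ?_
  rw [zetaG_reverse p l m (Finset.mem_range.1 hm), ← Finset.mul_sum]
  have h4 : ((-1 : ZMod p) ^ l.sum) * (-1) ^ l.sum = 1 := by rw [← mul_pow]; simp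
  linear_combination (polyI p k m * ∑ n ∈ Finset.range (p - m), polyI p l n) * h4
end
end

section
/- Harmonic (stuffle) product formula for multiple harmonic sums: for every positive integer N and all indices k, l, one has ζ_N(k)·ζ_N(l) = Σ_h b_h·ζ_N(h), where k∗l = Σ_h b_h·h is the harmonic product, a formal ℤ-linear combination of indices defined recursively by ∅∗l = l, k∗∅ = k, and (k⌢(a)) ∗ (l⌢(b)) = ((k∗(l⌢(b)))⌢(a)) + (((k⌢(a))∗l)⌢(b)) + ((k∗l)⌢(a+b)), where ⌢ denotes appending an entry at the end. -/
open scoped Classical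

noncomputable section

/-- The multiple harmonic sum `ζ_N(k) = Σ_{0 < n₁ < ⋯ < nₐ ≤ N} ∏ nᵢ^(-kᵢ)`,
as a rational number (`ζ_N(∅) = 1`). -/
def mhs (N : ℕ) (k : List ℕ) : ℚ :=
  ∑ n ∈ Finset.univ.filter
      (fun n : Fin k.length → Fin (N + 1) => (∀ i, 0 < (n i : ℕ)) ∧ StrictMono n),
    ∏ i, (((n i : ℕ) : ℚ) ^ k.get i)⁻¹

/-- Auxiliary recursion for the harmonic product, on reversed indices
(`cons` corresponds to appending an entry at the end of the index). -/
def harmRev : List ℕ → List ℕ → (List ℕ →₀ ℤ)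
  | [], l => Finsupp.single l 1
  | a :: k, [] => Finsupp.single (a :: k) 1
  | a :: k, b :: l =>
      (harmRev k (b :: l)).mapDomain (List.cons a) +
        (harmRev (a :: k) l).mapDomain (List.cons b) +
        (harmRev k l).mapDomain (List.cons (a + b))
  termination_by k l => k.length + l.length

/-- The harmonic (stuffle) product `k ∗ l` of two indices, as a formal
`ℤ`-linear combination of indices.  It satisfies `∅ ∗ l = l`, `k ∗ ∅ = k` and
`(k⌢a) ∗ (l⌢b) = ((k ∗ (l⌢b))⌢a) + (((k⌢a) ∗ l)⌢b) + ((k ∗ l)⌢(a+b))`. -/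
def harm (k l : List ℕ) : List ℕ →₀ ℤ :=
  (harmRev k.reverse l.reverse).mapDomain List.reverse

def mhsT (N m : ℕ) (f : Fin m → ℕ) : ℚ :=
  ∑ n ∈ (Fintype.piFinset fun _ : Fin m => Finset.Icc 1 N).filter (fun n => StrictMono n),
    ∏ i, (((n i : ℕ) : ℚ) ^ f i)⁻¹

def mhsZ : ℕ → List ℕ → ℚ
  | _, [] => 1
  | 0, _ :: _ => 0
  | N + 1, a :: k => mhsZ N (a :: k) + (((N + 1 : ℕ) : ℚ) ^ a)⁻¹ * mhsZ N k

lemma mhs_eq_mhsT (N : ℕ) (k : List ℕ) : mhs N k = mhsT N k.length k.get := by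
  unfold mhs mhsT
  refine Finset.sum_bij' (fun n _ i => (n i : ℕ)) (fun n _ i => Fin.ofNat (N + 1) (n i))
    ?_ ?_ ?_ ?_ ?_
  · intro n hn
    simp only [Finset.mem_filter, Finset.mem_univ, true_and, Fintype.mem_piFinset,
      Finset.mem_Icc] at hn ⊢
    exact ⟨fun i => ⟨hn.1 i, by have := (n i).2; omega⟩, fun i j h => hn.2 h⟩
  · intro n hn
    simp only [Finset.mem_filter, Finset.mem_univ, true_and, Fintype.mem_piFinset,
      Finset.mem_Icc] at hn ⊢
    have e : ∀ i, ((Fin.ofNat (N + 1) (n i) : Fin (N + 1)) : ℕ) = n i := fun i =>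
      Nat.mod_eq_of_lt (by have := hn.1 i; omega)
    refine ⟨fun i => by rw [e]; exact (hn.1 i).1, fun i j h => ?_⟩
    rw [Fin.lt_def, e, e]
    exact hn.2 h
  · intro n hn
    funext i
    apply Fin.ext
    exact Nat.mod_eq_of_lt (n i).2
  · intro n hn
    simp only [Finset.mem_filter, Fintype.mem_piFinset, Finset.mem_Icc] at hn
    funext i
    exact Nat.mod_eq_of_lt (by have := hn.1 i; omega)
  · intro n hn
    rfl

lemma mhsT_zero_right (N : ℕ) (f : Fin 0 → ℕ) : mhsT N 0 f = 1 := by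
  unfold mhsT
  have : (Fintype.piFinset fun _ : Fin 0 => Finset.Icc 1 N).filter (fun n => StrictMono n)
      = {fun _ => 0} := by
    ext n
    simp only [Finset.mem_filter, Fintype.mem_piFinset, Finset.mem_singleton]
    exact ⟨fun _ => Subsingleton.elim _ _, fun _ => ⟨fun i => i.elim0, fun i => i.elim0⟩⟩
  rw [this]
  simp

lemma mhsT_zero_left (m : ℕ) (f : Fin (m + 1) → ℕ) : mhsT 0 (m + 1) f = 0 := by
  unfold mhsT
  apply Finset.sum_eq_zero
  intro n hn
  simp only [Finset.mem_filter, Fintype.mem_piFinset, Finset.mem_Icc] at hn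
  have := hn.1 0
  omega

lemma mhsT_succ (N m : ℕ) (f : Fin (m + 1) → ℕ) :
    mhsT (N + 1) (m + 1) f = mhsT N (m + 1) f +
      (((N + 1 : ℕ) : ℚ) ^ f (Fin.last m))⁻¹ * mhsT N m (fun i => f i.castSucc) := by
  unfold mhsT
  rw [← Finset.sum_filter_not_add_sum_filter _ (fun n => n (Fin.last m) = N + 1)]
  congr 1
  · apply Finset.sum_congr _ (fun _ _ => rfl)
    ext n
    simp only [Finset.mem_filter, Fintype.mem_piFinset, Finset.mem_Icc]
    constructor
    · rintro ⟨⟨h1, h2⟩, h3⟩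
      refine ⟨fun i => ?_, h2⟩
      have := h2.monotone (Fin.le_last i)
      have a := h1 i
      have b := h1 (Fin.last m)
      omega
    · rintro ⟨h1, h2⟩
      refine ⟨⟨fun i => ?_, h2⟩, ?_⟩
      · have := h1 i
        omega
      · have := h1 (Fin.last m)
        omega
  · rw [Finset.mul_sum]
    refine Finset.sum_bij' (fun n _ i => n i.castSucc)
      (fun n _ => Fin.snoc (α := fun _ => ℕ) n (N + 1)) ?_ ?_ ?_ ?_ ?_
    · intro n hn
      simp only [Finset.mem_filter, Fintype.mem_piFinset, Finset.mem_Icc] at hn ⊢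
      obtain ⟨⟨h1, h2⟩, h3⟩ := hn
      refine ⟨fun i => ?_, fun i j h => h2 (Fin.castSucc_lt_castSucc_iff.2 h)⟩
      have := h2 (Fin.castSucc_lt_last i)
      have a := h1 i.castSucc
      omega
    · intro n hn
      simp only [Finset.mem_filter, Fintype.mem_piFinset, Finset.mem_Icc] at hn ⊢
      obtain ⟨h1, h2⟩ := hn
      refine ⟨⟨fun i => ?_, fun i j h => ?_⟩, by simp⟩
      · induction i using Fin.lastCases with
        | last => simp
        | cast i =>
          have := h1 i
          simp only [Fin.snoc_castSucc]
          omega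
      · induction j using Fin.lastCases with
        | last =>
          induction i using Fin.lastCases with
          | last => exact absurd h (lt_irrefl _)
          | cast i =>
            have := h1 i
            simp only [Fin.snoc_castSucc, Fin.snoc_last]
            omega
        | cast j =>
          induction i using Fin.lastCases with
          | last => exact absurd h (not_lt.2 (Fin.le_last _))
          | cast i =>
            simp only [Fin.snoc_castSucc]
            exact h2 (Fin.castSucc_lt_castSucc_iff.1 h)
    · intro n hn
      simp only [Finset.mem_filter] at hn
      funext i
      induction i using Fin.lastCases with
      | last => simp [hn.2]
      | cast i => simp
    · intro n hn
      funext i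
      simp
    · intro n hn
      simp only [Finset.mem_filter] at hn
      rw [Fin.prod_univ_castSucc, hn.2, mul_comm]

lemma mhsT_eq_mhsZ (N m : ℕ) (f : Fin m → ℕ) :
    mhsT N m f = mhsZ N (List.ofFn f).reverse := by
  induction N generalizing m with
  | zero =>
    cases m with
    | zero => simp [mhsT_zero_right, mhsZ]
    | succ m =>
      rw [mhsT_zero_left, List.ofFn_succ']
      simp [mhsZ]
  | succ N ih =>
    cases m with
    | zero => simp [mhsT_zero_right, mhsZ]
    | succ m =>
      rw [mhsT_succ, ih, ih, List.ofFn_succ']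
      simp [mhsZ]

lemma mhs_eq_mhsZ (N : ℕ) (k : List ℕ) : mhs N k = mhsZ N k.reverse := by
  rw [mhs_eq_mhsT, mhsT_eq_mhsZ, List.ofFn_get]

/-- Linear evaluation of a formal combination. -/
def mhsE (g : List ℕ → ℚ) (x : List ℕ →₀ ℤ) : ℚ := x.sum fun h c => (c : ℚ) * g h

lemma mhsE_add (g : List ℕ → ℚ) (x y : List ℕ →₀ ℤ) :
    mhsE g (x + y) = mhsE g x + mhsE g y :=
  Finsupp.sum_add_index' (by simp) (by intros; push_cast; ring)

lemma mhsE_map (g : List ℕ → ℚ) (u : List ℕ → List ℕ) (x : List ℕ →₀ ℤ) :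
    mhsE g (x.mapDomain u) = mhsE (fun h => g (u h)) x :=
  Finsupp.sum_mapDomain_index (by simp) (by intros; push_cast; ring)

lemma mhsE_single (g : List ℕ → ℚ) (k : List ℕ) :
    mhsE g (Finsupp.single k 1) = g k := by
  simp [mhsE]

lemma mhsE_cons_zero (a : ℕ) (x : List ℕ →₀ ℤ) :
    mhsE (mhsZ 0) (x.mapDomain (List.cons a)) = 0 := by
  rw [mhsE_map]
  simp [mhsE, mhsZ]

lemma mhsE_cons_succ (N a : ℕ) (x : List ℕ →₀ ℤ) :
    mhsE (mhsZ (N + 1)) (x.mapDomain (List.cons a)) =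
      mhsE (mhsZ N) (x.mapDomain (List.cons a)) +
        (((N + 1 : ℕ) : ℚ) ^ a)⁻¹ * mhsE (mhsZ N) x := by
  rw [mhsE_map, mhsE_map]
  unfold mhsE Finsupp.sum
  rw [Finset.mul_sum, ← Finset.sum_add_distrib]
  refine Finset.sum_congr rfl fun h _ => ?_
  simp only [mhsZ]
  ring

lemma mhsZ_nil (N : ℕ) : mhsZ N [] = 1 := by
  cases N <;> rfl

lemma mhsZ_mul (N : ℕ) (k l : List ℕ) :
    mhsZ N k * mhsZ N l = mhsE (mhsZ N) (harmRev k l) := by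
  induction N generalizing k l with
  | zero =>
    rcases k with _ | ⟨a, k⟩
    · rw [harmRev, mhsE_single, mhsZ_nil, one_mul]
    rcases l with _ | ⟨b, l⟩
    · rw [harmRev, mhsE_single, mhsZ_nil, mul_one]
    rw [harmRev, mhsE_add, mhsE_add, mhsE_cons_zero, mhsE_cons_zero, mhsE_cons_zero]
    simp [mhsZ]
  | succ N ih =>
    rcases k with _ | ⟨a, k⟩
    · rw [harmRev, mhsE_single, mhsZ_nil, one_mul]
    rcases l with _ | ⟨b, l⟩
    · rw [harmRev, mhsE_single, mhsZ_nil, mul_one]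
    have h := ih (a :: k) (b :: l)
    rw [harmRev, mhsE_add, mhsE_add] at h ⊢
    rw [mhsE_cons_succ, mhsE_cons_succ, mhsE_cons_succ, ← ih, ← ih, ← ih, mhsZ, mhsZ,
      pow_add, mul_inv]
    linear_combination h

/-- **Harmonic (stuffle) product formula for multiple harmonic sums.**
For every positive integer `N` and all indices `k`, `l`,
`ζ_N(k)·ζ_N(l) = Σ_h b_h ζ_N(h)` where `k ∗ l = Σ_h b_h h`. -/
theorem harmonic_product_formula (N : ℕ) (hN : 0 < N) (k l : List ℕ)
    (hk1 : ∀ i ∈ k, 1 ≤ i) (hl1 : ∀ i ∈ l, 1 ≤ i) :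
    mhs N k * mhs N l =
      ∑ h ∈ (harm k l).support, ((harm k l h : ℤ) : ℚ) * mhs N h := by
  have h := mhsZ_mul N k.reverse l.reverse
  rw [mhs_eq_mhsZ, mhs_eq_mhsZ, h]
  change _ = mhsE (mhs N) (harm k l)
  rw [harm, mhsE_map]
  congr 1
  funext x
  rw [mhs_eq_mhsZ, List.reverse_reverse]
end
end

section
/- Hoffman's identity: for every positive integer N and every nonempty index k=(k_1,…,k_a), one has Σ_{1≤n_1≤⋯≤n_a≤N} (−1)^{n_a−1}·binom(N, n_a)·∏_{i=1}^a n_i^{−k_i} = ζ*_N(k∨), where k∨ is the Hoffman dual of k. -/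
open scoped Classical

noncomputable section

/-- Last value of a tuple, with default `d` for the empty tuple. -/
def lastD {c : ℕ} (d : ℕ) (f : Fin c → ℕ) : ℕ :=
  if h : 0 < c then f ⟨c - 1, Nat.sub_lt h Nat.one_pos⟩ else d

/-- The multiple zeta-star harmonic sum
`ζ*_N(k) = Σ_{0 < n₁ ≤ ⋯ ≤ nₐ ≤ N} ∏ nᵢ^(-kᵢ)`, as a rational number. -/
def zetaStarN (N : ℕ) (k : List ℕ) : ℚ :=
  ∑ n ∈ Finset.univ.filter
      (fun n : Fin k.length → Fin (N + 1) => (∀ i, 0 < (n i : ℕ)) ∧ Monotone n),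
    ∏ i, (((n i : ℕ) : ℚ) ^ k.get i)⁻¹

/-- The left-hand side of Hoffman's identity:
`H*_N(k) = Σ_{1 ≤ n₁ ≤ ⋯ ≤ nₐ ≤ N} (-1)^(nₐ-1) · binom(N, nₐ) · ∏ nᵢ^(-kᵢ)`. -/
def hoffmanSum (N : ℕ) (k : List ℕ) : ℚ :=
  ∑ n ∈ Finset.univ.filter
      (fun n : Fin k.length → Fin (N + 1) => (∀ i, 0 < (n i : ℕ)) ∧ Monotone n),
    (-1 : ℚ) ^ (lastD 0 (fun i => (n i : ℕ)) - 1) *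
      (N.choose (lastD 0 fun i => (n i : ℕ)) : ℚ) *
      ∏ i, (((n i : ℕ) : ℚ) ^ k.get i)⁻¹

/-- The set of partial sums `S(k) = {k₁, k₁+k₂, …, k₁+⋯+k_{a-1}}` of an index. -/
def cuts (k : List ℕ) : Finset ℕ :=
  ((k.dropLast.scanl (· + ·) 0).tail).toFinset

/-- The composition of `w` whose set of partial sums is the given set `s ⊆ {1,…,w-1}`. -/
def compOfCuts (w : ℕ) (s : Finset ℕ) : List ℕ :=
  List.zipWith (· - ·) ((s.sort (· ≤ ·)) ++ [w]) (0 :: s.sort (· ≤ ·))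

/-- The Hoffman dual `k∨` of a nonempty index `k` of weight `w`: the unique index of
weight `w` with `S(k∨) = {1,…,w-1} \ S(k)`. -/
def hoffmanDual (k : List ℕ) : List ℕ :=
  compOfCuts k.sum ((Finset.Icc 1 (k.sum - 1)) \ cuts k)


/-- Alternating binomial transform. -/
def hT (f : ℕ → ℚ) (N : ℕ) : ℚ :=
  ∑ i ∈ Finset.range N, (-1 : ℚ) ^ i * (N.choose (i + 1) : ℚ) * f i

lemma hT_diff (f : ℕ → ℚ) (N : ℕ) :
    hT f (N + 1) - hT f N = ∑ i ∈ Finset.range (N + 1), (-1 : ℚ) ^ i * (N.choose i : ℚ) * f i := by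
  have h : hT f N = ∑ i ∈ Finset.range (N + 1), (-1 : ℚ) ^ i * (N.choose (i + 1) : ℚ) * f i := by
    rw [Finset.sum_range_succ, Nat.choose_succ_self]
    simp [hT]
  rw [h, hT, ← Finset.sum_sub_distrib]
  refine Finset.sum_congr rfl fun i _ => ?_
  rw [Nat.choose_succ_succ]
  push_cast
  ring

lemma hT_div (f : ℕ → ℚ) (N : ℕ) :
    hT (fun i => f i / ((i : ℚ) + 1)) N = ∑ i ∈ Finset.range N, hT f (i + 1) / ((i : ℚ) + 1) := by
  induction N with
  | zero => simp [hT]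
  | succ N ih =>
    rw [Finset.sum_range_succ, ← ih, ← sub_eq_iff_eq_add', hT_diff, hT, Finset.sum_div]
    refine Finset.sum_congr rfl fun i _ => ?_
    have h : ((N : ℚ) + 1) * (N.choose i : ℚ) = ((N + 1).choose (i + 1) : ℚ) * ((i : ℚ) + 1) := by
      exact_mod_cast Nat.add_one_mul_choose_eq N i
    have h1 : (N : ℚ) + 1 ≠ 0 := by positivity
    have h2 : (i : ℚ) + 1 ≠ 0 := by positivity
    field_simp
    linear_combination f i * h

lemma hT_sum (f : ℕ → ℚ) (N : ℕ) :
    hT (fun i => ∑ j ∈ Finset.range (i + 1), f j) (N + 1) = hT f (N + 1) - hT f N := by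
  have key : ∀ M, ∑ i ∈ Finset.range M, (-1 : ℚ) ^ i * ((N + 1).choose (i + 1) : ℚ) *
      (∑ j ∈ Finset.range (i + 1), f j) =
      ∑ i ∈ Finset.range M, (-1 : ℚ) ^ i * (N.choose i : ℚ) * f i
        - (-1 : ℚ) ^ M * (N.choose M : ℚ) * ∑ j ∈ Finset.range M, f j := by
    intro M
    induction M with
    | zero => simp
    | succ M ih =>
      rw [Finset.sum_range_succ, ih, Finset.sum_range_succ (n := M) (f := f),
        Finset.sum_range_succ (n := M), Nat.choose_succ_succ]
      push_cast
      ring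
  rw [hT_diff, hT, key, Nat.choose_succ_self]
  simp

/-- Tuple sum with a weight on the last entry. -/
def hQ (c N : ℕ) (k : Fin c → ℕ) (φ : ℕ → ℚ) : ℚ :=
  ∑ n ∈ Finset.univ.filter
      (fun n : Fin c → Fin (N + 1) => (∀ i, 0 < (n i : ℕ)) ∧ Monotone n),
    φ (lastD 0 (fun i => (n i : ℕ))) * ∏ i, (((n i : ℕ) : ℚ) ^ k i)⁻¹

lemma hQ_nat (c N : ℕ) (k : Fin c → ℕ) (φ : ℕ → ℚ) :
    hQ c N k φ = ∑ n ∈ (Fintype.piFinset (fun _ : Fin c => Finset.Icc 1 N)).filter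
      (fun n => Monotone n), φ (lastD 0 n) * ∏ i, ((n i : ℚ) ^ k i)⁻¹ := by
  unfold hQ
  refine Finset.sum_bij' (fun n _ i => (n i : ℕ)) (fun n _ i => Fin.ofNat (N + 1) (n i)) ?_ ?_ ?_ ?_ ?_
  · intro n hn
    simp only [Finset.mem_filter, Finset.mem_univ, true_and, Fintype.mem_piFinset,
      Finset.mem_Icc] at hn ⊢
    exact ⟨fun i => ⟨hn.1 i, by have := (n i).isLt; omega⟩, fun i j h => hn.2 h⟩
  · intro n hn
    simp only [Finset.mem_filter, Finset.mem_univ, true_and, Fintype.mem_piFinset,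
      Finset.mem_Icc] at hn ⊢
    have e : ∀ i, ((Fin.ofNat (N + 1) (n i) : Fin (N + 1)) : ℕ) = n i := fun i =>
      Nat.mod_eq_of_lt (by have := (hn.1 i).2; omega)
    refine ⟨fun i => by rw [e]; exact (hn.1 i).1, fun i j h => ?_⟩
    rw [Fin.le_def, e, e]
    exact hn.2 h
  · intro n hn
    funext i
    ext
    exact Nat.mod_eq_of_lt (n i).isLt
  · intro n hn
    simp only [Finset.mem_filter, Fintype.mem_piFinset, Finset.mem_Icc] at hn
    funext i
    exact Nat.mod_eq_of_lt (by have := (hn.1 i).2; omega)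
  · intro n hn
    rfl

lemma hQ_succ (c N : ℕ) (k : Fin (c + 1) → ℕ) (φ : ℕ → ℚ) :
    hQ (c + 1) N k φ = ∑ m ∈ Finset.Icc 1 N,
      φ m * ((m : ℚ) ^ k (Fin.last c))⁻¹ * hQ c m (fun i => k i.castSucc) (fun _ => 1) := by
  simp only [hQ_nat, Finset.mul_sum]
  rw [Finset.sum_sigma']
  refine Finset.sum_bij' (fun n _ => ⟨n (Fin.last c), fun i => n i.castSucc⟩)
    (fun x _ => Fin.snoc (α := fun _ => ℕ) x.2 x.1) ?_ ?_ ?_ ?_ ?_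
  · intro n hn
    simp only [Finset.mem_filter, Fintype.mem_piFinset, Finset.mem_Icc, Finset.mem_sigma] at hn ⊢
    exact ⟨hn.1 _, fun i => ⟨(hn.1 _).1, hn.2 (Fin.le_last _)⟩,
      fun i j h => hn.2 (by simpa using h)⟩
  · rintro ⟨m, n⟩ hn
    simp only [Finset.mem_filter, Fintype.mem_piFinset, Finset.mem_Icc, Finset.mem_sigma] at hn ⊢
    obtain ⟨h1, h2, h3⟩ := hn
    constructor
    · intro i
      induction i using Fin.lastCases with
      | last => simpa using h1
      | cast i => simpa using ⟨(h2 i).1, (h2 i).2.trans h1.2⟩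
    · intro i j h
      induction j using Fin.lastCases with
      | last =>
        induction i using Fin.lastCases with
        | last => simp
        | cast i => simpa using (h2 i).2
      | cast j =>
        induction i using Fin.lastCases with
        | last =>
          exfalso
          rw [Fin.le_def] at h
          have := j.isLt
          simp at h
          omega
        | cast i => simpa using h3 (by simpa using h)
  · intro n hn
    funext i
    induction i using Fin.lastCases with
    | last => simp
    | cast i => simp
  · rintro ⟨m, n⟩ hn
    simp
  · intro n hn
    have e : lastD 0 n = n (Fin.last c) := by
      simp only [lastD, Nat.succ_pos, dif_pos]
      rfl
    simp only [e]
    rw [Fin.prod_univ_castSucc]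
    ring

lemma hQ_append (N : ℕ) (l : List ℕ) (a : ℕ) (φ : ℕ → ℚ) :
    hQ (l ++ [a]).length N (l ++ [a]).get φ = ∑ i ∈ Finset.range N,
      φ (i + 1) * (((i : ℚ) + 1) ^ a)⁻¹ * zetaStarN (i + 1) l := by
  have gen : ∀ (c : ℕ) (k : Fin c → ℕ) (h : c = l.length + 1),
      hQ c N k φ = hQ (l.length + 1) N (fun i => k (i.cast h.symm)) φ := by
    intro c k h
    subst h
    rfl
  rw [gen _ _ (by simp), hQ_succ, Finset.range_eq_Ico, ← Finset.Ico_add_one_right_eq_Icc,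
    ← Finset.sum_Ico_add' _ 0 N 1]
  refine Finset.sum_congr rfl fun i _ => ?_
  simp [zetaStarN, hQ]

lemma zeta_append (N : ℕ) (l : List ℕ) (a : ℕ) :
    zetaStarN N (l ++ [a]) = ∑ i ∈ Finset.range N,
      (((i : ℚ) + 1) ^ a)⁻¹ * zetaStarN (i + 1) l := by
  have h := hQ_append N l a (fun _ => 1)
  simp only [one_mul] at h
  rw [← h]
  simp [zetaStarN, hQ]

lemma hoff_append (N : ℕ) (l : List ℕ) (a : ℕ) :
    hoffmanSum N (l ++ [a]) =
      hT (fun i => (((i : ℚ) + 1) ^ a)⁻¹ * zetaStarN (i + 1) l) N := by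
  have h := hQ_append N l a (fun m => (-1 : ℚ) ^ (m - 1) * (N.choose m : ℚ))
  unfold hT
  simp only [Nat.add_sub_cancel, mul_assoc] at h ⊢
  rw [← h]
  simp [hoffmanSum, hQ, mul_assoc]

lemma zeta_nil (N : ℕ) : zetaStarN N [] = 1 := by
  unfold zetaStarN
  rw [Finset.filter_true_of_mem]
  · simp
  · intro n _
    exact ⟨fun i => i.elim0, fun i => i.elim0⟩

lemma cuts_append (l : List ℕ) (a : ℕ) :
    cuts (l ++ [a]) = ((l.scanl (· + ·) 0).tail).toFinset := by
  simp [cuts]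

lemma cuts_append_one (l : List ℕ) (b a : ℕ) :
    cuts (l ++ [b] ++ [a]) = insert (l ++ [b]).sum (cuts (l ++ [b])) := by
  rw [cuts_append, cuts_append, List.scanl_append]
  ext x
  cases l with
  | nil => simp
  | cons c l =>
    simp [List.sum_eq_foldl, or_comm]

lemma cuts_lt (l : List ℕ) (b : ℕ) (hb : 1 ≤ b) : ∀ x ∈ cuts (l ++ [b]), x < (l ++ [b]).sum := by
  induction l using List.reverseRecOn generalizing b with
  | nil => simp [cuts]
  | append_singleton l c ih =>
    intro x hx
    rw [cuts_append_one, Finset.mem_insert] at hx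
    rcases hx with rfl | hx
    · simp; omega
    · rcases Nat.eq_zero_or_pos c with rfl | hc
      · have h : cuts (l ++ [0]) = cuts (l ++ [b]) := by rw [cuts_append, cuts_append]
        rw [h] at hx
        have := ih b hb x hx
        simpa using this
      · have := ih c hc x hx
        simp at this ⊢
        omega

lemma comp_snoc (w : ℕ) (s : Finset ℕ) (hs : ∀ x ∈ s, x < w) :
    compOfCuts (w + 1) (insert w s) = compOfCuts w s ++ [1] := by
  have h : (insert w s).sort (· ≤ ·) = s.sort (· ≤ ·) ++ [w] := by
    have hw : w ∉ s := fun h => lt_irrefl _ (hs w h)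
    refine List.Perm.eq_of_pairwise' (r := (· ≤ ·)) (Finset.pairwise_sort _ _) ?_ ?_
    · rw [List.pairwise_append]
      refine ⟨Finset.pairwise_sort _ _, by simp, ?_⟩
      intro a ha b hb
      simp at ha hb
      subst hb
      exact (hs a ha).le
    · rw [List.perm_ext_iff_of_nodup (Finset.sort_nodup _ _)]
      · intro a; simp [or_comm]
      · rw [List.nodup_append]
        refine ⟨Finset.sort_nodup _ _, by simp, ?_⟩
        intro a ha b hb
        simp at ha hb
        subst hb
        exact (hs a ha).ne
  unfold compOfCuts
  rw [h, ← List.cons_append, List.zipWith_append (by simp)]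
  simp

lemma comp_inc (w : ℕ) (s : Finset ℕ) (hw : 0 < w) (hs : ∀ x ∈ s, x < w) :
    ∃ P b, compOfCuts w s = P ++ [b] ∧ compOfCuts (w + 1) s = P ++ [b + 1] := by
  obtain ⟨M, x, h⟩ : ∃ M x, 0 :: s.sort (· ≤ ·) = M ++ [x] :=
    ⟨_, _, (List.dropLast_append_getLast (by simp)).symm⟩
  have hl : (s.sort (· ≤ ·)).length = M.length := by
    have := congrArg List.length h
    simpa using this
  have hx : x < w := by
    have : x ∈ 0 :: s.sort (· ≤ ·) := by rw [h]; simp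
    simp at this
    rcases this with rfl | h
    · exact hw
    · exact hs x h
  refine ⟨List.zipWith (· - ·) (s.sort (· ≤ ·)) M, w - x, ?_, ?_⟩
  · unfold compOfCuts
    rw [h, List.zipWith_append hl]
    simp
  · unfold compOfCuts
    rw [h, List.zipWith_append hl]
    simp
    omega

lemma dual_one (l : List ℕ) (b : ℕ) (hb : 1 ≤ b) :
    ∃ P c, hoffmanDual (l ++ [b]) = P ++ [c] ∧ hoffmanDual (l ++ [b] ++ [1]) = P ++ [c + 1] := by
  unfold hoffmanDual
  have hw : 0 < (l ++ [b]).sum := by simp; omega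
  rw [cuts_append_one, List.sum_append (l₁ := l ++ [b])]
  generalize (l ++ [b]).sum = w at *
  have e : Finset.Icc 1 (w + [1].sum - 1) \ insert w (cuts (l ++ [b]))
      = Finset.Icc 1 (w - 1) \ cuts (l ++ [b]) := by
    ext x
    simp only [Finset.mem_sdiff, Finset.mem_Icc, Finset.mem_insert, List.sum_singleton]
    constructor
    · rintro ⟨h1, h2⟩
      push Not at h2
      exact ⟨by omega, h2.2⟩
    · rintro ⟨h1, h2⟩
      refine ⟨by omega, ?_⟩
      rintro (h | h)
      · omega
      · exact h2 h
  rw [e]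
  refine comp_inc w _ hw ?_
  intro x hx
  simp at hx
  omega

lemma dual_succ (l : List ℕ) (a : ℕ) (ha : 1 ≤ a) :
    hoffmanDual (l ++ [a + 1]) = hoffmanDual (l ++ [a]) ++ [1] := by
  have hc : cuts (l ++ [a + 1]) = cuts (l ++ [a]) := by rw [cuts_append, cuts_append]
  have hlt := cuts_lt l a ha
  have hw : 0 < (l ++ [a]).sum := by simp; omega
  have hsum : (l ++ [a + 1]).sum = (l ++ [a]).sum + 1 := by simp; omega
  unfold hoffmanDual
  rw [hc, hsum]
  generalize (l ++ [a]).sum = w at *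
  have e : Finset.Icc 1 (w + 1 - 1) \ cuts (l ++ [a])
      = insert w (Finset.Icc 1 (w - 1) \ cuts (l ++ [a])) := by
    ext x
    simp only [Finset.mem_sdiff, Finset.mem_Icc, Finset.mem_insert]
    constructor
    · rintro ⟨h1, h2⟩
      by_cases hx : x = w
      · exact Or.inl hx
      · exact Or.inr ⟨by omega, h2⟩
    · rintro (rfl | ⟨h1, h2⟩)
      · exact ⟨by omega, fun h => lt_irrefl _ (hlt _ h)⟩
      · exact ⟨by omega, h2⟩
  rw [e]
  refine comp_snoc w _ ?_
  intro x hx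
  simp at hx
  omega

lemma dual_base : hoffmanDual [1] = [] ++ [1] := by
  simp [hoffmanDual, cuts, compOfCuts]

lemma hoffman_aux (l : List ℕ) (hl : ∀ i ∈ l, 1 ≤ i) (a : ℕ) (ha : 1 ≤ a) :
    ∀ N, hoffmanSum N (l ++ [a]) = zetaStarN N (hoffmanDual (l ++ [a])) := by
  induction l using List.reverseRecOn generalizing a with
  | nil =>
    induction a, ha using Nat.le_induction with
    | base =>
      intro N
      rw [hoff_append, List.nil_append, dual_base, zeta_append]
      simp only [zeta_nil, mul_one, pow_one]
      have h := hT_div (fun _ => 1) N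
      simp only [one_div] at h
      rw [h]
      refine Finset.sum_congr rfl fun i _ => ?_
      have h2 := hT_sum (fun j => if j = 0 then 1 else 0) i
      have h3 : ∀ M, hT (fun j => if j = 0 then 1 else 0) M = M := by
        intro M
        cases M <;> simp [hT]
      rw [h3, h3] at h2
      simp at h2
      rw [h2, one_div]
    | succ a ha ih =>
      intro N
      rw [dual_succ _ _ ha, hoff_append, zeta_append]
      have h := hT_div (fun i => (((i : ℚ) + 1) ^ a)⁻¹ * zetaStarN (i + 1) []) N
      simp only [← hoff_append, ih] at h
      simp only [pow_one]
      convert h using 2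
      · funext i
        rw [pow_succ, mul_inv]; ring
      · rw [div_eq_inv_mul]
  | append_singleton l b ihl =>
    have hb : 1 ≤ b := hl b (by simp)
    have ihl' := ihl (fun i hi => hl i (by simp [hi])) b hb
    induction a, ha using Nat.le_induction with
    | base =>
      intro N
      obtain ⟨P, c, h1, h2⟩ := dual_one l b hb
      rw [h1] at ihl'
      rw [h2, hoff_append, zeta_append]
      have h := hT_div (fun i => zetaStarN (i + 1) (l ++ [b])) N
      simp only [zeta_append _ l b, hT_sum, ← hoff_append, ihl'] at h
      simp only [zeta_append _ P c, Finset.sum_range_succ_sub_sum] at h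
      convert h using 2
      · funext i
        rw [zeta_append, pow_one, div_eq_inv_mul]
      · rw [pow_succ, mul_inv]; ring
    | succ a ha ih =>
      intro N
      rw [dual_succ _ _ ha, hoff_append, zeta_append]
      have h := hT_div (fun i => (((i : ℚ) + 1) ^ a)⁻¹ * zetaStarN (i + 1) (l ++ [b])) N
      simp only [← hoff_append, ih] at h
      simp only [pow_one]
      convert h using 2
      · funext i
        rw [pow_succ, mul_inv]; ring
      · rw [div_eq_inv_mul]

/-- **Hoffman's identity.**  For every positive integer `N` and every nonempty index `k`,
`Σ_{1 ≤ n₁ ≤ ⋯ ≤ nₐ ≤ N} (-1)^(nₐ-1) binom(N, nₐ) ∏ nᵢ^(-kᵢ) = ζ*_N(k∨)`. -/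
theorem hoffman_identity (N : ℕ) (hN : 0 < N) (k : List ℕ)
    (hk : k ≠ []) (hk1 : ∀ i ∈ k, 1 ≤ i) :
    hoffmanSum N k = zetaStarN N (hoffmanDual k) := by
  obtain ⟨l, a, rfl⟩ : ∃ l a, k = l ++ [a] :=
    ⟨_, _, (List.dropLast_append_getLast hk).symm⟩
  exact hoffman_aux l (fun i hi => hk1 i (by simp [hi])) a (hk1 a (by simp)) N
end
end

section
/- Hoffman's relation: let k=(k_1,…,k_a) be a nonempty admissible index (all k_i≥1, k_a≥2). Then Σ_{i=0}^{a−1} ζ(k_1,…,k_i, k_{i+1}+1, k_{i+2},…,k_a) = Σ_{i=1}^{a} Σ_{j=1}^{k_i−1} ζ(k_1,…,k_{i−1}, k_i−j, j+1, k_{i+1},…,k_a), where inner sums with k_i=1 are empty; all indices appearing are admissible, so all multiple zeta values converge. -/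
open scoped Classical

noncomputable section

/-- Truncated sums over `m < n₁ < ⋯ < nₐ < N`. -/
def hfT (N : ℕ) : List ℕ → ℕ → ℝ
  | [], _ => 1
  | k :: ks, m => ∑ n ∈ Finset.Ico (m + 1) N, ((n : ℝ) ^ k)⁻¹ * hfT N ks n

/-- Harmonic numbers. -/
def hfH (n : ℕ) : ℝ := ∑ i ∈ Finset.range n, ((i : ℝ) + 1)⁻¹

/-- The weight `H_{n-1} - H_{n-1-m}`. -/
def hfg (n m : ℕ) : ℝ := hfH (n - 1) - hfH (n - 1 - m)

/-- Truncated sum weighted at the top. -/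
def hfG (N : ℕ) : List ℕ → ℕ → ℝ
  | [], m => hfg N m
  | k :: ks, m => ∑ n ∈ Finset.Ico (m + 1) N, ((n : ℝ) ^ k)⁻¹ * hfG N ks n

/-- Truncated sum weighted at the bottom. -/
def hfP (N : ℕ) : List ℕ → ℕ → ℝ
  | [], m => hfg N m
  | k :: ks, m => ∑ n ∈ Finset.Ico (m + 1) N, ((n : ℝ) ^ k)⁻¹ * hfg n m * hfT N ks n

def hfL (N : ℕ) (k : List ℕ) (m : ℕ) : ℝ :=
  ∑ i ∈ Finset.range k.length, hfT N (k.take i ++ [k.getD i 0 + 1] ++ k.drop (i + 1)) m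

def hfR (N : ℕ) (k : List ℕ) (m : ℕ) : ℝ :=
  ∑ i ∈ Finset.range k.length, ∑ j ∈ Finset.Icc 1 (k.getD i 0 - 1),
    hfT N (k.take i ++ [k.getD i 0 - j, j + 1] ++ k.drop (i + 1)) m

lemma hfL_cons (N k : ℕ) (ks : List ℕ) (m : ℕ) :
    hfL N (k :: ks) m = hfT N ((k + 1) :: ks) m +
      ∑ n ∈ Finset.Ico (m + 1) N, ((n : ℝ) ^ k)⁻¹ * hfL N ks n := by
  unfold hfL
  rw [List.length_cons, Finset.sum_range_succ', add_comm]
  congr 1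
  simp only [List.take_succ_cons, List.getD_cons_succ, List.drop_succ_cons, List.cons_append,
    hfT, Finset.mul_sum]
  rw [Finset.sum_comm]

lemma hfR_cons (N k : ℕ) (ks : List ℕ) (m : ℕ) :
    hfR N (k :: ks) m = (∑ j ∈ Finset.Icc 1 (k - 1), hfT N ((k - j) :: (j + 1) :: ks) m) +
      ∑ n ∈ Finset.Ico (m + 1) N, ((n : ℝ) ^ k)⁻¹ * hfR N ks n := by
  unfold hfR
  rw [List.length_cons, Finset.sum_range_succ', add_comm]
  congr 1
  simp only [List.take_succ_cons, List.getD_cons_succ, List.drop_succ_cons, List.cons_append,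
    hfT, Finset.mul_sum]
  conv_rhs => rw [Finset.sum_comm]
  refine Finset.sum_congr rfl fun i _ => ?_
  rw [Finset.sum_comm]

lemma hfH_succ (n : ℕ) : hfH (n + 1) = hfH n + ((n : ℝ) + 1)⁻¹ := by
  simp [hfH, Finset.sum_range_succ]

lemma hf_sumA (p N : ℕ) : ∑ q ∈ Finset.Ico (p + 1) N, ((q : ℝ) - p)⁻¹ = hfH (N - 1 - p) := by
  rw [Finset.sum_Ico_eq_sum_range, hfH, show N - (p + 1) = N - 1 - p by omega]
  refine Finset.sum_congr rfl fun i _ => ?_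
  push_cast
  congr 1
  ring

lemma hf_sumB (p N : ℕ) (h : p < N) :
    ∑ q ∈ Finset.Ico (p + 1) N, (q : ℝ)⁻¹ = hfH (N - 1) - hfH p := by
  obtain ⟨d, rfl⟩ := Nat.exists_eq_add_of_lt h
  induction d with
  | zero => simp
  | succ d ih =>
    rw [← add_assoc, Finset.sum_Ico_succ_top (by omega), ih (by omega)]
    have : p + d + 1 + 1 - 1 = (p + d + 1 - 1) + 1 := by omega
    rw [this, hfH_succ]
    simp
    ring

lemma hf_sumC (m q : ℕ) : ∑ p ∈ Finset.Ico (m + 1) q, ((q : ℝ) - p)⁻¹ = hfH (q - 1 - m) := by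
  rw [Finset.sum_Ico_eq_sum_range, hfH, show q - (m + 1) = q - 1 - m by omega,
    ← Finset.sum_range_reflect]
  refine Finset.sum_congr rfl fun i hi => ?_
  have hi := Finset.mem_range.1 hi
  congr 1
  have : (q : ℝ) = ((m + 1 + (q - 1 - m - 1 - i) + i + 1 : ℕ) : ℝ) := by
    congr 1; omega
  rw [this]
  push_cast
  ring

lemma hf_swap (m N : ℕ) (f : ℕ → ℕ → ℝ) :
    ∑ p ∈ Finset.Ico (m + 1) N, ∑ q ∈ Finset.Ico (p + 1) N, f p q =
      ∑ q ∈ Finset.Ico (m + 1) N, ∑ p ∈ Finset.Ico (m + 1) q, f p q := by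
  refine Finset.sum_comm' ?_
  intro x y
  simp only [Finset.mem_Ico]
  omega

lemma hf_key1 (p n : ℕ) (h : p < n) :
    ∑ q ∈ Finset.Ico (p + 1) n, (((q : ℝ) - p)⁻¹ - (q : ℝ)⁻¹) = hfH p - hfg n p := by
  rw [Finset.sum_sub_distrib, hf_sumA, hf_sumB p n h, hfg]
  ring

lemma hf_key (N : ℕ) (ks : List ℕ) (p : ℕ) (h : p < N) :
    ∑ q ∈ Finset.Ico (p + 1) N, (((q : ℝ) - p)⁻¹ - (q : ℝ)⁻¹) * hfT N ks q =
      hfH p * hfT N ks p - hfP N ks p := by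
  cases ks with
  | nil =>
    simp only [hfT, hfP, mul_one]
    exact hf_key1 p N h
  | cons k ks =>
    simp only [hfT, hfP, Finset.mul_sum]
    rw [hf_swap, ← Finset.sum_sub_distrib]
    refine Finset.sum_congr rfl fun n hn => ?_
    rw [← Finset.sum_mul, hf_key1 p n (by have := Finset.mem_Ico.1 hn; omega)]
    ring

lemma hf_geom (x y : ℝ) (k : ℕ) :
    (x - y) * ∑ j ∈ Finset.Icc 1 k, x ^ (k + 1 - j) * y ^ j = x * y * (x ^ k - y ^ k) := by
  induction k with
  | zero => simp
  | succ k ih =>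
    rw [Finset.sum_Icc_succ_top (by omega)]
    have : ∑ j ∈ Finset.Icc 1 k, x ^ (k + 1 + 1 - j) * y ^ j =
        x * ∑ j ∈ Finset.Icc 1 k, x ^ (k + 1 - j) * y ^ j := by
      rw [Finset.mul_sum]
      refine Finset.sum_congr rfl fun j hj => ?_
      have := Finset.mem_Icc.1 hj
      rw [show k + 1 + 1 - j = (k + 1 - j) + 1 by omega]
      ring
    rw [this, show k + 1 + 1 - (k + 1) = 1 by omega]
    linear_combination x * ih

lemma hf_pf (k p q : ℕ) (hk : 1 ≤ k) (hp : 0 < p) (hq : p < q) :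
    ∑ j ∈ Finset.Icc 1 (k - 1), ((p : ℝ) ^ (k - j))⁻¹ * ((q : ℝ) ^ (j + 1))⁻¹ =
      ((p : ℝ) ^ k)⁻¹ * (((q : ℝ) - p)⁻¹ - (q : ℝ)⁻¹) - ((q : ℝ) ^ k)⁻¹ * ((q : ℝ) - p)⁻¹ := by
  obtain ⟨k, rfl⟩ : ∃ l, k = l + 1 := ⟨k - 1, by omega⟩
  have hp' : (0 : ℝ) < p := by exact_mod_cast hp
  have hq' : (p : ℝ) < q := by exact_mod_cast hq
  have hq0 : (0 : ℝ) < q := hp'.trans hq'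
  have hd : (q : ℝ) - p ≠ 0 := by linarith
  have hg := hf_geom (p : ℝ)⁻¹ (q : ℝ)⁻¹ k
  have e : ∑ j ∈ Finset.Icc 1 (k + 1 - 1), ((p : ℝ) ^ (k + 1 - j))⁻¹ * ((q : ℝ) ^ (j + 1))⁻¹ =
      (q : ℝ)⁻¹ * ∑ j ∈ Finset.Icc 1 k, (p : ℝ)⁻¹ ^ (k + 1 - j) * (q : ℝ)⁻¹ ^ j := by
    rw [Finset.mul_sum]
    refine Finset.sum_congr rfl fun j hj => ?_
    rw [inv_pow, inv_pow, pow_succ, mul_inv]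
    ring
  rw [e]
  generalize ∑ j ∈ Finset.Icc 1 k, (p : ℝ)⁻¹ ^ (k + 1 - j) * (q : ℝ)⁻¹ ^ j = S at *
  have hS : ((q : ℝ) - p) * S = (p : ℝ)⁻¹ ^ k - (q : ℝ)⁻¹ ^ k := by
    have : (p : ℝ)⁻¹ - (q : ℝ)⁻¹ = ((q : ℝ) - p) * ((p : ℝ)⁻¹ * (q : ℝ)⁻¹) := by
      field_simp
    rw [this] at hg
    have h0 : (p : ℝ)⁻¹ * (q : ℝ)⁻¹ ≠ 0 := by positivity
    apply mul_left_cancel₀ h0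
    linear_combination hg
  have hS' : S = ((p : ℝ)⁻¹ ^ k - (q : ℝ)⁻¹ ^ k) * ((q : ℝ) - p)⁻¹ := by
    rw [← hS]; field_simp
  rw [hS', ← inv_pow, ← inv_pow, pow_succ, pow_succ]
  generalize (p : ℝ)⁻¹ ^ k = a
  generalize (q : ℝ)⁻¹ ^ k = b
  field_simp
  ring

lemma hf_step (N k : ℕ) (hk : 1 ≤ k) (ks : List ℕ) (m : ℕ) :
    ∑ j ∈ Finset.Icc 1 (k - 1), hfT N ((k - j) :: (j + 1) :: ks) m =
      hfT N ((k + 1) :: ks) m + hfP N (k :: ks) m -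
        ∑ n ∈ Finset.Ico (m + 1) N, ((n : ℝ) ^ k)⁻¹ * hfP N ks n := by
  have h1 : ∑ j ∈ Finset.Icc 1 (k - 1), hfT N ((k - j) :: (j + 1) :: ks) m =
      ∑ p ∈ Finset.Ico (m + 1) N, ∑ q ∈ Finset.Ico (p + 1) N,
        (((p : ℝ) ^ k)⁻¹ * ((((q : ℝ) - p)⁻¹ - (q : ℝ)⁻¹) * hfT N ks q)
          - ((q : ℝ) ^ k)⁻¹ * hfT N ks q * ((q : ℝ) - p)⁻¹) := by
    simp only [hfT, Finset.mul_sum]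
    rw [Finset.sum_comm]
    refine Finset.sum_congr rfl fun p hp => ?_
    rw [Finset.sum_comm]
    refine Finset.sum_congr rfl fun q hq => ?_
    have hp := Finset.mem_Ico.1 hp
    have hq := Finset.mem_Ico.1 hq
    have := hf_pf k p q hk (by omega) (by omega)
    simp only [← mul_assoc]
    rw [← Finset.sum_mul, this]
    ring
  have hPc : hfP N (k :: ks) m =
      ∑ n ∈ Finset.Ico (m + 1) N, ((n : ℝ) ^ k)⁻¹ * hfg n m * hfT N ks n := rfl
  rw [h1]
  simp only [Finset.sum_sub_distrib]
  rw [hf_swap m N (fun p q => ((q : ℝ) ^ k)⁻¹ * hfT N ks q * ((q : ℝ) - p)⁻¹)]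
  simp only [← Finset.mul_sum, hf_sumC, hfT, hPc]
  rw [← Finset.sum_sub_distrib, ← Finset.sum_add_distrib, ← Finset.sum_sub_distrib]
  refine Finset.sum_congr rfl fun n hn => ?_
  have hn := Finset.mem_Ico.1 hn
  rw [hf_key N ks n (by omega), hfg]
  obtain ⟨n, rfl⟩ : ∃ l, n = l + 1 := ⟨n - 1, by omega⟩
  rw [hfH_succ, pow_succ, mul_inv]
  simp only [Nat.add_sub_cancel]
  push_cast
  ring

lemma hf_finite (N : ℕ) (ks : List ℕ) (hks : ∀ i ∈ ks, 1 ≤ i) (m : ℕ) :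
    hfL N ks m - hfR N ks m = hfG N ks m - hfP N ks m := by
  induction ks generalizing m with
  | nil => simp [hfL, hfR, hfG, hfP]
  | cons k ks ih =>
    have ih := ih (fun i hi => hks i (by simp [hi]))
    rw [hfL_cons, hfR_cons, hf_step N k (hks k (by simp))]
    have : hfG N (k :: ks) m = ∑ n ∈ Finset.Ico (m + 1) N, ((n : ℝ) ^ k)⁻¹ *
        (hfP N ks n + hfL N ks n - hfR N ks n) := by
      rw [hfG]
      refine Finset.sum_congr rfl fun n hn => ?_
      rw [show hfP N ks n + hfL N ks n - hfR N ks n = hfG N ks n by linarith [ih n]]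
    rw [this]
    simp only [mul_sub, mul_add, Finset.sum_sub_distrib, Finset.sum_add_distrib]
    ring

lemma hfP_zero (N : ℕ) (ks : List ℕ) : hfP N ks 0 = 0 := by
  cases ks <;> simp [hfP, hfg]

/-- Admissible indices. -/
inductive hfAdm : List ℕ → Prop
  | single (x : ℕ) (h : 2 ≤ x) : hfAdm [x]
  | cons (k : ℕ) (l : List ℕ) (h : 1 ≤ k) (hl : hfAdm l) : hfAdm (k :: l)

lemma hfAdm_of (k : List ℕ) (hk : k ≠ [])
    (hk1 : ∀ i ∈ k, 1 ≤ i) (hka : 2 ≤ k.getLast hk) : hfAdm k := by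
  induction k with
  | nil => exact absurd rfl hk
  | cons a l ih =>
    cases l with
    | nil => exact .single a (by simpa using hka)
    | cons b l =>
      refine .cons a _ (hk1 a (by simp)) (ih (by simp) (fun i hi => hk1 i (by simp [hi])) ?_)
      simpa using hka

lemma hfAdm_L (k : List ℕ) (h : hfAdm k) (i : ℕ) (hi : i < k.length) :
    hfAdm (k.take i ++ [k.getD i 0 + 1] ++ k.drop (i + 1)) := by
  induction h generalizing i with
  | single x h =>
    obtain rfl : i = 0 := by simpa using hi
    exact .single _ (by simp; omega)
  | cons k l h hl ih =>
    cases i with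
    | zero => simpa using hfAdm.cons (k + 1) l (by omega) hl
    | succ i => simpa using hfAdm.cons k _ h (ih i (by simpa using hi))

lemma hfAdm_R (k : List ℕ) (h : hfAdm k) (i : ℕ) (hi : i < k.length) (j : ℕ)
    (hj : j ∈ Finset.Icc 1 (k.getD i 0 - 1)) :
    hfAdm (k.take i ++ [k.getD i 0 - j, j + 1] ++ k.drop (i + 1)) := by
  induction h generalizing i with
  | single x h =>
    obtain rfl : i = 0 := by simpa using hi
    simp at hj
    exact .cons _ _ (by simp; omega) (.single _ (by omega))
  | cons k l h hl ih =>
    cases i with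
    | zero =>
      simp at hj
      simpa using hfAdm.cons (k - j) _ (by omega) (hfAdm.cons (j + 1) l (by omega) hl)
    | succ i => simpa using hfAdm.cons k _ h (ih i (by simpa using hi) (by simpa using hj))

lemma hfT_nonneg (N : ℕ) (ks : List ℕ) (m : ℕ) : 0 ≤ hfT N ks m := by
  induction ks generalizing m with
  | nil => simp [hfT]
  | cons k ks ih => exact Finset.sum_nonneg fun n _ => mul_nonneg (by positivity) (ih n)

lemma hf_inv_rpow_sum (ε : ℝ) (hε : 0 < ε) : ∃ Z : ℝ, 0 ≤ Z ∧ ∀ s : Finset ℕ,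
    ∑ n ∈ s, (n : ℝ) ^ (-(1 + ε)) ≤ Z := by
  have hs : Summable fun n : ℕ => (n : ℝ) ^ (-(1 + ε)) :=
    Real.summable_nat_rpow.2 (by linarith)
  exact ⟨_, tsum_nonneg fun n => by positivity, fun s => hs.sum_le_tsum s fun n _ => by positivity⟩

/-- One step of the tail estimate. -/
lemma hf_tail (ε : ℝ) (hε : 0 < ε) (C : ℝ) (hC : 0 ≤ C) (f : ℕ → ℕ → ℝ)
    (hf : ∀ N n : ℕ, 1 ≤ n → f N n ≤ C * (n : ℝ) ^ (-(1 + ε))) :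
    ∃ ε' : ℝ, 0 < ε' ∧ ∃ C' : ℝ, 0 ≤ C' ∧ ∀ m N : ℕ,
      ∑ n ∈ Finset.Ico (m + 1) N, f N n ≤ C' * ((m : ℝ) + 1) ^ (-ε') := by
  obtain ⟨Z, hZ, hZs⟩ := hf_inv_rpow_sum (ε / 2) (by linarith)
  refine ⟨ε / 2, by linarith, C * Z, by positivity, fun m N => ?_⟩
  calc ∑ n ∈ Finset.Ico (m + 1) N, f N n
      ≤ ∑ n ∈ Finset.Ico (m + 1) N,
        C * ((m : ℝ) + 1) ^ (-(ε / 2)) * (n : ℝ) ^ (-(1 + ε / 2)) := by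
        refine Finset.sum_le_sum fun n hn => ?_
        have hn := Finset.mem_Ico.1 hn
        have hmn : (m : ℝ) + 1 ≤ n := by exact_mod_cast hn.1
        have hn0 : (0 : ℝ) < n := by have : (0 : ℝ) ≤ m := by positivity
                                     linarith
        refine (hf N n (by omega)).trans ?_
        rw [mul_assoc]
        refine mul_le_mul_of_nonneg_left ?_ hC
        rw [show -(1 + ε) = -(ε / 2) + -(1 + ε / 2) by ring, Real.rpow_add hn0]
        refine mul_le_mul_of_nonneg_right ?_ (by positivity)
        exact Real.rpow_le_rpow_of_nonpos (by positivity) hmn (by linarith)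
    _ = C * ((m : ℝ) + 1) ^ (-(ε / 2)) *
        ∑ n ∈ Finset.Ico (m + 1) N, (n : ℝ) ^ (-(1 + ε / 2)) := by rw [Finset.mul_sum]
    _ ≤ C * ((m : ℝ) + 1) ^ (-(ε / 2)) * Z :=
        mul_le_mul_of_nonneg_left (hZs _) (by positivity)
    _ = _ := by ring

lemma hfT_bound (ks : List ℕ) (h : hfAdm ks) : ∃ ε : ℝ, 0 < ε ∧ ∃ C : ℝ, 0 ≤ C ∧ ∀ m N : ℕ,
    hfT N ks m ≤ C * ((m : ℝ) + 1) ^ (-ε) := by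
  induction h with
  | single x h =>
    have := hf_tail 1 one_pos 1 zero_le_one (fun N n => ((n : ℝ) ^ x)⁻¹ * hfT N [] n) ?_
    · simpa only [hfT] using this
    · intro N n hn
      have hn1 : (1 : ℝ) ≤ n := by exact_mod_cast hn
      simp only [hfT, mul_one, one_mul]
      rw [Real.rpow_neg (by positivity)]
      refine inv_anti₀ (by positivity) ?_
      rw [show (1 + 1 : ℝ) = ((2 : ℕ) : ℝ) by norm_num, Real.rpow_natCast]
      exact pow_le_pow_right₀ hn1 h
  | cons k l h hl ih =>
    obtain ⟨ε, hε, C, hC, hb⟩ := ih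
    have := hf_tail ε hε C hC (fun N n => ((n : ℝ) ^ k)⁻¹ * hfT N l n) ?_
    · simpa only [hfT] using this
    · intro N n hn
      have hn1 : (1 : ℝ) ≤ n := by exact_mod_cast hn
      have hn0 : (0 : ℝ) < n := by linarith
      rw [show -(1 + ε) = -1 + -ε by ring, Real.rpow_add hn0, Real.rpow_neg_one]
      have h1 : ((n : ℝ) ^ k)⁻¹ ≤ (n : ℝ)⁻¹ := by
        refine inv_anti₀ hn0 ?_
        simpa using pow_le_pow_right₀ hn1 h
      have h2 : hfT N l n ≤ C * (n : ℝ) ^ (-ε) := by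
        refine (hb n N).trans (mul_le_mul_of_nonneg_left ?_ hC)
        exact Real.rpow_le_rpow_of_nonpos hn0 (by linarith) (by linarith)
      calc ((n : ℝ) ^ k)⁻¹ * hfT N l n ≤ (n : ℝ)⁻¹ * (C * (n : ℝ) ^ (-ε)) :=
            mul_le_mul h1 h2 (hfT_nonneg _ _ _) (by positivity)
        _ = _ := by ring

/-- Link between box sums and the recursion. -/
lemma hf_box (N : ℕ) (k : List ℕ) (m : ℕ) :
    ∑ n ∈ Fintype.piFinset (fun _ : Fin k.length => Finset.range N),
      Set.indicator {n : Fin k.length → ℕ | (∀ i, m < n i) ∧ StrictMono n}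
        (fun n => ∏ i, ((n i : ℝ) ^ k.get i)⁻¹) n = hfT N k m := by
  induction k generalizing m with
  | nil =>
    have : StrictMono (default : Fin 0 → ℕ) := fun i => i.elim0
    simp [hfT, Set.indicator, Subsingleton.strictMono]
  | cons x ks ih =>
    have hcond : ∀ (a : ℕ) (n : Fin ks.length → ℕ),
        ((∀ i, m < (Fin.cons a n : Fin (ks.length + 1) → ℕ) i) ∧
          StrictMono (Fin.cons a n : Fin (ks.length + 1) → ℕ)) ↔
        (m < a ∧ ((∀ i, a < n i) ∧ StrictMono n)) := by
      intro a n
      constructor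
      · rintro ⟨h1, h2⟩
        refine ⟨by simpa using h1 0, fun i => ?_, fun i j hij => ?_⟩
        · simpa using h2 (Fin.succ_pos i)
        · simpa using h2 (Fin.succ_lt_succ_iff.2 hij)
      · rintro ⟨h1, h2, h3⟩
        refine ⟨fun i => ?_, fun i j hij => ?_⟩
        · refine Fin.cases ?_ (fun i => ?_) i
          · simpa using h1
          · simpa using h1.trans (h2 i)
        · induction i using Fin.cases with
          | zero =>
            induction j using Fin.cases with
            | zero => exact absurd hij (lt_irrefl _)
            | succ j => simpa using h2 j
          | succ i =>
            induction j using Fin.cases with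
            | zero => exact absurd hij (by simp)
            | succ j => simpa using h3 (Fin.succ_lt_succ_iff.1 hij)
    have e1 : ∑ n ∈ Fintype.piFinset (fun _ : Fin (x :: ks).length => Finset.range N),
        Set.indicator {n : Fin (x :: ks).length → ℕ | (∀ i, m < n i) ∧ StrictMono n}
        (fun n => ∏ i, ((n i : ℝ) ^ (x :: ks).get i)⁻¹) n =
        ∑ z ∈ Finset.range N ×ˢ Fintype.piFinset (fun _ : Fin ks.length => Finset.range N),
          if m < z.1 then ((z.1 : ℝ) ^ x)⁻¹ *
            Set.indicator {n : Fin ks.length → ℕ | (∀ i, z.1 < n i) ∧ StrictMono n}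
              (fun n => ∏ i, ((n i : ℝ) ^ ks.get i)⁻¹) z.2 else 0 := by
      symm
      refine Finset.sum_equiv (Fin.consEquiv (fun _ : Fin (ks.length + 1) => ℕ)) ?_ ?_
      · rintro ⟨a, n⟩
        simp only [Finset.mem_product, Fintype.mem_piFinset, Fin.consEquiv]
        exact (Fin.forall_fin_succ (P := fun i =>
          (Fin.cons a n : Fin (ks.length + 1) → ℕ) i ∈ Finset.range N)).symm
      · rintro ⟨a, n⟩ _
        have hc := hcond a n
        have hp : ∏ i : Fin (ks.length + 1),
            ((((Fin.cons a n : Fin (ks.length + 1) → ℕ) i : ℕ) : ℝ) ^ (x :: ks).get i)⁻¹ =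
            ((a : ℝ) ^ x)⁻¹ * ∏ i, ((n i : ℝ) ^ ks.get i)⁻¹ := by
          rw [Fin.prod_univ_succ]
          simp
        simp only [Set.indicator, Set.mem_ofPred_eq]
        change _ = if ((∀ i, m < (Fin.cons a n : Fin (ks.length + 1) → ℕ) i) ∧
          StrictMono (Fin.cons a n : Fin (ks.length + 1) → ℕ)) then (∏ i : Fin (ks.length + 1),
            ((((Fin.cons a n : Fin (ks.length + 1) → ℕ) i : ℕ) : ℝ) ^ (x :: ks).get i)⁻¹) else 0
        rw [hp]
        by_cases h1 : m < a
        · by_cases h2 : ((∀ i, a < n i) ∧ StrictMono n)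
          · rw [if_pos h1, if_pos h2, if_pos (hc.2 ⟨h1, h2⟩)]
          · rw [if_pos h1, if_neg h2, if_neg (fun h => h2 (hc.1 h).2), mul_zero]
        · rw [if_neg h1, if_neg (fun h => h1 (hc.1 h).1)]
    rw [e1, Finset.sum_product, hfT]
    have e2 : Finset.Ico (m + 1) N = (Finset.range N).filter (fun a => m < a) := by
      ext a; simp; omega
    rw [e2, Finset.sum_filter]
    refine Finset.sum_congr rfl fun a _ => ?_
    by_cases h : m < a
    · simp only [h, if_true]
      rw [← ih a, Finset.mul_sum]
    · simp [h]

lemma hf_tendsto (k : List ℕ) (h : hfAdm k) :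
    Filter.Tendsto (fun N => hfT N k 0) Filter.atTop (nhds (mzv k)) := by
  obtain ⟨ε, hε, C, hC, hb⟩ := hfT_bound k h
  have hnn : ∀ n, 0 ≤ Set.indicator {n : Fin k.length → ℕ | (∀ i, 0 < n i) ∧ StrictMono n}
        (fun n => ∏ i, ((n i : ℝ) ^ k.get i)⁻¹) n := fun n =>
    Set.indicator_nonneg (fun n _ => Finset.prod_nonneg fun i _ => by positivity) n
  have hmono : Monotone fun N : ℕ =>
      Fintype.piFinset (fun _ : Fin k.length => Finset.range N) := fun a b hab =>
    Fintype.piFinset_subset _ _ fun _ => Finset.range_mono hab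
  have hcof : ∀ n : Fin k.length → ℕ,
      ∃ N : ℕ, n ∈ Fintype.piFinset (fun _ : Fin k.length => Finset.range N) := fun n =>
    ⟨∑ i, n i + 1, Fintype.mem_piFinset.2 fun i => Finset.mem_range.2
      (Nat.lt_succ_of_le (Finset.single_le_sum (fun _ _ => Nat.zero_le _) (Finset.mem_univ i)))⟩
  have ht := Filter.tendsto_atTop_finset_of_monotone hmono hcof
  have hs : Summable (Set.indicator {n : Fin k.length → ℕ | (∀ i, 0 < n i) ∧ StrictMono n}
        (fun n => ∏ i, ((n i : ℝ) ^ k.get i)⁻¹)) := by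
    refine summable_of_sum_le (c := C) hnn fun u => ?_
    obtain ⟨N, hN⟩ := (ht.eventually_ge_atTop u).exists
    refine (Finset.sum_le_sum_of_subset_of_nonneg hN fun n _ _ => hnn n).trans ?_
    rw [hf_box]
    simpa using hb 0 N
  have := hs.hasSum.comp ht
  refine this.congr fun N => ?_
  exact hf_box N k 0

lemma hfH_mono : Monotone hfH := by
  refine monotone_nat_of_le_succ fun n => ?_
  rw [hfH_succ]
  have : (0 : ℝ) ≤ ((n : ℝ) + 1)⁻¹ := by positivity
  linarith

lemma hfH_nonneg (n : ℕ) : 0 ≤ hfH n := Finset.sum_nonneg fun i _ => by positivity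

lemma hfg_nonneg (n m : ℕ) : 0 ≤ hfg n m := sub_nonneg.2 (hfH_mono (by omega))

lemma hfg_le (a m : ℕ) : hfH (a + m) - hfH a ≤ m * ((a : ℝ) + 1)⁻¹ := by
  induction m with
  | zero => simp
  | succ m ih =>
    rw [← add_assoc, hfH_succ]
    have : (((a + m : ℕ) : ℝ) + 1)⁻¹ ≤ ((a : ℝ) + 1)⁻¹ :=
      inv_anti₀ (by positivity) (by push_cast; linarith [(Nat.cast_nonneg m : (0 : ℝ) ≤ m)])
    push_cast at *
    linarith

lemma hfG_nonneg (N : ℕ) (ks : List ℕ) (m : ℕ) : 0 ≤ hfG N ks m := by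
  induction ks generalizing m with
  | nil => exact hfg_nonneg _ _
  | cons k ks ih => exact Finset.sum_nonneg fun n _ => mul_nonneg (by positivity) (ih n)

lemma hf_sum_inv_le (m N : ℕ) : ∑ n ∈ Finset.Ico (m + 1) N, (n : ℝ)⁻¹ ≤ hfH N := by
  by_cases h : m < N
  · rw [hf_sumB m N h]
    linarith [hfH_nonneg m, hfH_mono (show N - 1 ≤ N by omega)]
  · rw [Finset.Ico_eq_empty (by omega)]
    simpa using hfH_nonneg N

lemma hfG_bound (ks : List ℕ) (h : hfAdm ks) (N : ℕ) (m : ℕ) :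
    hfG N ks m ≤ hfH N ^ ks.length * (2 / N) := by
  induction h generalizing m with
  | single x h =>
    simp only [hfG, List.length_singleton, pow_one]
    calc ∑ n ∈ Finset.Ico (m + 1) N, ((n : ℝ) ^ x)⁻¹ * hfg N n
        ≤ ∑ n ∈ Finset.Ico (m + 1) N, (N : ℝ)⁻¹ * ((n : ℝ)⁻¹ + ((N : ℝ) - n)⁻¹) := by
          refine Finset.sum_le_sum fun n hn => ?_
          have hn := Finset.mem_Ico.1 hn
          have hn1 : (1 : ℝ) ≤ n := by exact_mod_cast (by omega : 1 ≤ n)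
          have hn0 : (0 : ℝ) < n := by linarith
          have hnN : (n : ℝ) < N := by exact_mod_cast hn.2
          have hd : (0 : ℝ) < (N : ℝ) - n := by linarith
          have hN0 : (0 : ℝ) < N := by linarith
          have h1 : ((n : ℝ) ^ x)⁻¹ ≤ ((n : ℝ) ^ 2)⁻¹ :=
            inv_anti₀ (by positivity) (pow_le_pow_right₀ hn1 h)
          have h2 : hfg N n ≤ n * ((N : ℝ) - n)⁻¹ := by
            have := hfg_le (N - 1 - n) n
            have e : (((N - 1 - n : ℕ) : ℝ) + 1) = (N : ℝ) - n := by
              have : (N : ℝ) = ((N - 1 - n + 1 + n : ℕ) : ℝ) := by congr 1; omega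
              rw [this]; push_cast; ring
            rw [e, show N - 1 - n + n = N - 1 by omega] at this
            exact this
          calc _ ≤ ((n : ℝ) ^ 2)⁻¹ * (n * ((N : ℝ) - n)⁻¹) :=
                mul_le_mul h1 h2 (hfg_nonneg _ _) (by positivity)
            _ = _ := by field_simp; ring
      _ = (N : ℝ)⁻¹ * (∑ n ∈ Finset.Ico (m + 1) N, (n : ℝ)⁻¹ + hfH (N - 1 - m)) := by
          rw [← Finset.mul_sum, Finset.sum_add_distrib, hf_sumC]
      _ ≤ (N : ℝ)⁻¹ * (hfH N + hfH N) :=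
          mul_le_mul_of_nonneg_left (add_le_add (hf_sum_inv_le m N) (hfH_mono (by omega)))
            (by positivity)
      _ = _ := by ring
  | cons k l h hl ih =>
    have hnn : 0 ≤ hfH N ^ l.length * (2 / (N : ℝ)) :=
      mul_nonneg (pow_nonneg (hfH_nonneg N) _) (by positivity)
    calc hfG N (k :: l) m
        ≤ ∑ n ∈ Finset.Ico (m + 1) N, (n : ℝ)⁻¹ * (hfH N ^ l.length * (2 / N)) := by
          refine Finset.sum_le_sum fun n hn => ?_
          have hn := Finset.mem_Ico.1 hn
          have hn1 : (1 : ℝ) ≤ n := by exact_mod_cast (by omega : 1 ≤ n)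
          have hn0 : (0 : ℝ) < n := by linarith
          have h1 : ((n : ℝ) ^ k)⁻¹ ≤ (n : ℝ)⁻¹ := by
            refine inv_anti₀ hn0 ?_
            simpa using pow_le_pow_right₀ hn1 h
          exact mul_le_mul h1 (ih n) (hfG_nonneg _ _ _) (by positivity)
      _ ≤ hfH N * (hfH N ^ l.length * (2 / N)) := by
          rw [← Finset.sum_mul]
          exact mul_le_mul_of_nonneg_right (hf_sum_inv_le m N) hnn
      _ = _ := by rw [List.length_cons, pow_succ]; ring

lemma hfH_le_log (n : ℕ) : hfH n ≤ 1 + Real.log n := by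
  have := harmonic_le_one_add_log n
  simpa [hfH, harmonic] using this

lemma hfG_tendsto (ks : List ℕ) (h : hfAdm ks) :
    Filter.Tendsto (fun N => hfG N ks 0) Filter.atTop (nhds 0) := by
  have h1 : Filter.Tendsto (fun N : ℕ => (2 * Real.log N) ^ ks.length * (2 / (N : ℝ)))
      Filter.atTop (nhds 0) := by
    have := ((Real.isLittleO_pow_log_id_atTop (n := ks.length)).tendsto_div_nhds_zero.comp
      tendsto_natCast_atTop_atTop).const_mul ((2 : ℝ) ^ ks.length * 2)
    rw [mul_zero] at this
    refine this.congr fun N => ?_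
    simp only [Function.comp, id, mul_pow]
    ring
  refine squeeze_zero' (Filter.Eventually.of_forall fun N => hfG_nonneg N ks 0) ?_ h1
  filter_upwards [(Real.tendsto_log_atTop.comp tendsto_natCast_atTop_atTop).eventually_ge_atTop 1]
    with N hN
  refine (hfG_bound ks h N 0).trans (mul_le_mul_of_nonneg_right ?_ (by positivity))
  refine pow_le_pow_left₀ (hfH_nonneg N) ?_ _
  have := hfH_le_log N
  simp only [Function.comp] at hN
  linarith

/-- **Hoffman's relation.**  For a nonempty admissible index `k = (k₁,…,kₐ)`,
`Σ_{i=0}^{a-1} ζ(k₁,…,kᵢ,k_{i+1}+1,k_{i+2},…,kₐ)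
  = Σ_{i=1}^{a} Σ_{j=1}^{kᵢ-1} ζ(k₁,…,k_{i-1},kᵢ-j,j+1,k_{i+1},…,kₐ)`. -/
theorem hoffman_relation (k : List ℕ) (hk : k ≠ [])
    (hk1 : ∀ i ∈ k, 1 ≤ i) (hka : 2 ≤ k.getLast hk) :
    ∑ i ∈ Finset.range k.length,
        mzv (k.take i ++ [k.getD i 0 + 1] ++ k.drop (i + 1)) =
      ∑ i ∈ Finset.range k.length, ∑ j ∈ Finset.Icc 1 (k.getD i 0 - 1),
        mzv (k.take i ++ [k.getD i 0 - j, j + 1] ++ k.drop (i + 1)) := by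
  have hA := hfAdm_of k hk hk1 hka
  have tL : Filter.Tendsto (fun N => hfL N k 0) Filter.atTop (nhds (∑ i ∈ Finset.range k.length,
        mzv (k.take i ++ [k.getD i 0 + 1] ++ k.drop (i + 1)))) :=
    tendsto_finsetSum _ fun i hi => hf_tendsto _ (hfAdm_L k hA i (Finset.mem_range.1 hi))
  have tR : Filter.Tendsto (fun N => hfR N k 0) Filter.atTop (nhds (∑ i ∈ Finset.range k.length,
      ∑ j ∈ Finset.Icc 1 (k.getD i 0 - 1),
        mzv (k.take i ++ [k.getD i 0 - j, j + 1] ++ k.drop (i + 1)))) :=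
    tendsto_finsetSum _ fun i hi => tendsto_finsetSum _ fun j hj =>
      hf_tendsto _ (hfAdm_R k hA i (Finset.mem_range.1 hi) j hj)
  have tG := hfG_tendsto k hA
  have hd := tL.sub tR
  have : (fun N => hfL N k 0 - hfR N k 0) = fun N => hfG N k 0 := by
    funext N
    rw [hf_finite N k hk1 0, hfP_zero, sub_zero]
  rw [this] at hd
  exact sub_eq_zero.1 (tendsto_nhds_unique hd tG)
end
end

section
/- Transport relation for the shuffle connected sum: for all nonempty indices k, l, every nonempty index h, and every positive integer N, one has Z^sh_N(k_↑; l_↑; h) = Z^sh_N(k; l_↑; ↑h) + Z^sh_N(k_↑; l; ↑h). -/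
open scoped Classical

noncomputable section

/-- First value of a tuple, with default `d` for the empty tuple. -/
def headD {c : ℕ} (d : ℕ) (f : Fin c → ℕ) : ℕ :=
  if h : 0 < c then f ⟨0, h⟩ else d

/-- The weight `∏_{i=1}^{a-1} nᵢ^(-kᵢ) · nₐ^(-(kₐ-1))` (the last exponent is lowered by 1). -/
def wtLast (k : List ℕ) (n : Fin k.length → ℕ) : ℝ :=
  ∏ i, ((n i : ℝ) ^ (if i.1 = k.length - 1 then k.get i - 1 else k.get i))⁻¹

/-- The weight `r₁^(-(h₁-1)) · ∏_{i=2}^{c} rᵢ^(-hᵢ)` (the first exponent is lowered by 1). -/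
def wtFirst (h : List ℕ) (r : Fin h.length → ℕ) : ℝ :=
  ∏ i, ((r i : ℝ) ^ (if i.1 = 0 then h.get i - 1 else h.get i))⁻¹

/-- The shuffle connected sum `Z^sh_N(k; l; h)`: the sum of
`(∏_{i<a} nᵢ^(-kᵢ)) nₐ^(-(kₐ-1)) (∏_{i<b} mᵢ^(-lᵢ)) m_b^(-(l_b-1)) r₁^(-(h₁-1)) ∏_{i≥2} rᵢ^(-hᵢ)`
over `0 < n₁ < ⋯ < nₐ`, `0 < m₁ < ⋯ < m_b`, `r₁ < ⋯ < r_c ≤ N` with `r₁ = nₐ + m_b`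
(with `nₐ := 0` if `a = 0` and `m_b := 0` if `b = 0`). -/
def Zsh (N : ℕ) (k l h : List ℕ) : ℝ :=
  ∑' p : (Fin k.length → ℕ) × (Fin l.length → ℕ) × (Fin h.length → ℕ),
    Set.indicator
      {p : (Fin k.length → ℕ) × (Fin l.length → ℕ) × (Fin h.length → ℕ) |
        (∀ i, 0 < p.1 i) ∧ StrictMono p.1 ∧ (∀ i, 0 < p.2.1 i) ∧ StrictMono p.2.1 ∧
          StrictMono p.2.2 ∧ lastD 0 p.2.2 ≤ N ∧
          headD 0 p.2.2 = lastD 0 p.1 + lastD 0 p.2.1}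
      (fun p => wtLast k p.1 * wtLast l p.2.1 * wtFirst h p.2.2) p

/-- `k_↑`: increase the last entry of an index by `1` (`∅_↑ = ∅`). -/
def upLast : List ℕ → List ℕ
  | [] => []
  | k => k.dropLast ++ [k.getLast! + 1]

/-- `↑k`: increase the first entry of an index by `1` (`↑∅ = ∅`). -/
def upFirst : List ℕ → List ℕ
  | [] => []
  | a :: k => (a + 1) :: k

/-- Index set of the sum. -/
def GS (N a b c : ℕ) : Set ((Fin a → ℕ) × (Fin b → ℕ) × (Fin c → ℕ)) :=
  {p | (∀ i, 0 < p.1 i) ∧ StrictMono p.1 ∧ (∀ i, 0 < p.2.1 i) ∧ StrictMono p.2.1 ∧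
          StrictMono p.2.2 ∧ lastD 0 p.2.2 ≤ N ∧
          headD 0 p.2.2 = lastD 0 p.1 + lastD 0 p.2.1}

/-- Generic monomial weight. -/
def GW (a : ℕ) (e : ℕ → ℕ) (n : Fin a → ℕ) : ℝ := ∏ i, ((n i : ℝ) ^ e i.1)⁻¹

theorem Zsh_eq (N : ℕ) (k l h : List ℕ) (a b c : ℕ) (e f g : ℕ → ℕ)
    (ha : k.length = a) (hb : l.length = b) (hc : h.length = c)
    (he : ∀ i (hi : i < k.length), (if i = k.length - 1 then k[i] - 1 else k[i]) = e i)
    (hf : ∀ i (hi : i < l.length), (if i = l.length - 1 then l[i] - 1 else l[i]) = f i)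
    (hg : ∀ i (hi : i < h.length), (if i = 0 then h[i] - 1 else h[i]) = g i) :
    Zsh N k l h = ∑' p, Set.indicator (GS N a b c)
      (fun p => GW a e p.1 * GW b f p.2.1 * GW c g p.2.2) p := by
  subst ha hb hc
  have h1 : wtLast k = GW k.length e := by
    funext n
    exact Finset.prod_congr rfl fun i _ => by rw [← he i.1 i.2]; rfl
  have h2 : wtLast l = GW l.length f := by
    funext n
    exact Finset.prod_congr rfl fun i _ => by rw [← hf i.1 i.2]; rfl
  have h3 : wtFirst h = GW h.length g := by
    funext n
    exact Finset.prod_congr rfl fun i _ => by rw [← hg i.1 i.2]; rfl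
  unfold Zsh
  rw [h1, h2, h3]
  rfl

theorem lastD_succ {a : ℕ} (n : Fin (a + 1) → ℕ) : lastD 0 n = n (Fin.last a) := by
  simp [lastD, Fin.last]

theorem headD_succ {a : ℕ} (n : Fin (a + 1) → ℕ) : headD 0 n = n 0 := by
  simp [headD]

theorem GS_finite (N a b c : ℕ) : (GS N (a + 1) (b + 1) (c + 1)).Finite := by
  apply (Set.finite_Icc (0 : (Fin (a + 1) → ℕ) × (Fin (b + 1) → ℕ) × (Fin (c + 1) → ℕ))
    (fun _ => N, fun _ => N, fun _ => N)).subset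
  rintro ⟨n, m, r⟩ ⟨_, h2, _, h4, h5, h6, h7⟩
  simp only [lastD_succ, headD_succ] at h2 h4 h5 h6 h7
  have h8 := h5.monotone (Fin.zero_le (Fin.last c))
  refine ⟨⟨fun i => Nat.zero_le _, fun i => Nat.zero_le _, fun i => Nat.zero_le _⟩,
    fun i => ?_, fun i => ?_, fun i => ?_⟩
  · have := h2.monotone (Fin.le_last i)
    show n i ≤ N
    omega
  · have := h4.monotone (Fin.le_last i)
    show m i ≤ N
    omega
  · have := h5.monotone (Fin.le_last i)
    show r i ≤ N
    omega

theorem G_summable (N a b c : ℕ)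
    (F : (Fin (a + 1) → ℕ) × (Fin (b + 1) → ℕ) × (Fin (c + 1) → ℕ) → ℝ) :
    Summable (Set.indicator (GS N (a + 1) (b + 1) (c + 1)) F) :=
  summable_of_hasFiniteSupport ((GS_finite N a b c).subset (Set.support_indicator_subset))

theorem GW_last (a : ℕ) (e : ℕ → ℕ) (x : ℕ) (n : Fin (a + 1) → ℕ) :
    GW (a + 1) (fun i => if i = a then x else e i) n =
      GW a e (fun i => n i.castSucc) * ((n (Fin.last a) : ℝ) ^ x)⁻¹ := by
  unfold GW
  rw [Fin.prod_univ_castSucc]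
  simp [fun i : Fin a => i.2.ne]

theorem GW_first (a : ℕ) (e : ℕ → ℕ) (x : ℕ) (n : Fin (a + 1) → ℕ) :
    GW (a + 1) (fun i => if i = 0 then x else e i) n =
      GW a (fun i => e (i + 1)) (fun i => n i.succ) * ((n 0 : ℝ) ^ x)⁻¹ := by
  unfold GW
  rw [Fin.prod_univ_succ]
  simp [mul_comm]

theorem upLast_append (k : List ℕ) (x : ℕ) : upLast (k ++ [x]) = k ++ [x + 1] := by
  cases k with
  | nil => simp [upLast, List.getLast!]
  | cons a k =>
    simp only [upLast, List.cons_append, List.getLast!]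
    have : (a :: (k ++ [x])).dropLast = a :: k := by
      rw [← List.cons_append, List.dropLast_concat]
    rw [this]
    simp

theorem exp_last (k : List ℕ) (x i : ℕ) (hi : i < (k ++ [x]).length) :
    (if i = (k ++ [x]).length - 1 then (k ++ [x])[i] - 1 else (k ++ [x])[i]) =
      (fun i => if i = k.length then x - 1 else k.getD i 0) i := by
  simp only [List.length_append, List.length_singleton, Nat.add_sub_cancel]
  split_ifs with h
  · subst h; simp
  · have : i < k.length := by simp at hi; omega
    simp [List.getElem_append, this]

theorem exp_first (k : List ℕ) (x i : ℕ) (hi : i < (x :: k).length) :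
    (if i = 0 then (x :: k)[i] - 1 else (x :: k)[i]) =
      (fun i => if i = 0 then x - 1 else k.getD (i - 1) 0) i := by
  cases i with
  | zero => simp
  | succ i =>
    have : i < k.length := by simpa using hi
    simp [this]

/-- **Transport relation for the shuffle connected sum:**
`Z^sh_N(k_↑; l_↑; h) = Z^sh_N(k; l_↑; ↑h) + Z^sh_N(k_↑; l; ↑h)`
for nonempty indices `k`, `l`, a nonempty index `h`, and `N ≥ 1`. -/
theorem Zsh_transport_up (N : ℕ) (hN : 0 < N) (k l h : List ℕ)
    (hk : k ≠ []) (hk1 : ∀ i ∈ k, 1 ≤ i)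
    (hl : l ≠ []) (hl1 : ∀ i ∈ l, 1 ≤ i)
    (hh : h ≠ []) (hh1 : ∀ i ∈ h, 1 ≤ i) :
    Zsh N (upLast k) (upLast l) h =
      Zsh N k (upLast l) (upFirst h) + Zsh N (upLast k) l (upFirst h) := by
  obtain ⟨k, x, rfl⟩ := (List.eq_nil_or_concat k).resolve_left hk
  obtain ⟨l, y, rfl⟩ := (List.eq_nil_or_concat l).resolve_left hl
  obtain ⟨z, h, rfl⟩ := List.exists_cons_of_ne_nil hh
  have hx : 1 ≤ x := hk1 x (by simp)
  have hy : 1 ≤ y := hl1 y (by simp)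
  have hz : 1 ≤ z := hh1 z (by simp)
  obtain ⟨x, rfl⟩ := Nat.exists_eq_add_of_le' hx
  obtain ⟨y, rfl⟩ := Nat.exists_eq_add_of_le' hy
  obtain ⟨z, rfl⟩ := Nat.exists_eq_add_of_le' hz
  have key : ∀ x y z : ℕ, Zsh N (k ++ [x]) (l ++ [y]) (z :: h) = _ := fun x y z =>
    Zsh_eq N (k ++ [x]) (l ++ [y]) (z :: h) (k.length + 1) (l.length + 1) (h.length + 1)
      _ _ _ (by simp) (by simp) (by simp) (exp_last k x) (exp_last l y) (exp_first h z)
  simp only [List.concat_eq_append, upLast_append, upFirst]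
  rw [key, key, key, ← Summable.tsum_add (G_summable _ _ _ _ _) (G_summable _ _ _ _ _)]
  refine tsum_congr fun p => ?_
  by_cases hp : p ∈ GS N (k.length + 1) (l.length + 1) (h.length + 1)
  · simp only [Set.indicator_of_mem hp, GW_last, GW_first, Nat.add_sub_cancel]
    obtain ⟨h1, -, h3, -, -, -, h7⟩ := hp
    simp only [lastD_succ, headD_succ] at h7
    have hn : (0 : ℝ) < p.1 (Fin.last _) := by exact_mod_cast h1 _
    have hm : (0 : ℝ) < p.2.1 (Fin.last _) := by exact_mod_cast h3 _
    rw [h7]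
    push_cast
    field_simp
    ring
  · simp [Set.indicator_of_notMem hp]
end
end
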